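/- arXiv:1702.02866 — 3 statements merged into one kernel-verified Lean document; each statement's English description precedes it below -/
import Mathlib

section
/- Fix t > 0 and set Λ^{(t)}_j = e^{-t·2^j} for j ∈ ℤ. Let K_t be the kernel in 𝒦 associated to the decreasing sequence (Λ^{(t)}_j), equivalently K_t(x,y) = Σ_{h∈ℋ} e^{-t·2^{j(h)}} h(x) h(y) for x ≠ y. Then K_t(x,y) = (1/t)·ψ(δ(x,y)/t) for all x ≠ y, where ψ(r) = (1/r)(Σ_{j≥1} 2^{-j} e^{-1/(2^j r)} − e^{-1/r}), and consequently δ(x,y)² K_t(x,y) → (2/3)·t as δ(x,y) → +∞. -/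
open MeasureTheory Set Filter
open scoped ENNReal

/-- The dyadic distance on ℝ⁺: the infimum of the lengths of the dyadic
intervals `[k·2^{-j}, (k+1)·2^{-j})` containing both points (and `0` on the diagonal). -/
noncomputable def dyadicDist (x y : ℝ) : ℝ :=
  if x = y then 0
  else sInf {r : ℝ | ∃ (j : ℤ) (k : ℕ), r = (2:ℝ) ^ (-j) ∧
    x ∈ Set.Ico ((k : ℝ) * (2:ℝ) ^ (-j)) (((k : ℝ) + 1) * (2:ℝ) ^ (-j)) ∧
    y ∈ Set.Ico ((k : ℝ) * (2:ℝ) ^ (-j)) (((k : ℝ) + 1) * (2:ℝ) ^ (-j))}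

/-- The sequence `α_l = 2^{-l}(k_{-l} - k_{-l+1})` associated to the level values `k` of a
kernel in `𝒦`. -/
noncomputable def alphaOf (k : ℤ → ℝ) (l : ℤ) : ℝ :=
  (2:ℝ) ^ (-l) * (k (-l) - k (-l + 1))

/-- The profile `φ(s) = Σ_{l∈ℤ} α_l 2^l χ_{(0,2^{-l}]}(s)` associated to the level values `k`. -/
noncomputable def phiOf (k : ℤ → ℝ) (s : ℝ) : ℝ :=
  ∑' l : ℤ, alphaOf k l * ((2:ℝ) ^ l * (if s ∈ Set.Ioc (0:ℝ) ((2:ℝ) ^ (-l)) then 1 else 0))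

/-- The sequence `Λ_j = Σ_{l>j} α_l` associated to the level values `k`. -/
noncomputable def LambdaOf (k : ℤ → ℝ) (j : ℤ) : ℝ :=
  ∑' m : ℕ, alphaOf k (j + 1 + m)

/-- The Haar function `h^j_k(x) = 2^{j/2}(χ_{[0,1/2)} - χ_{[1/2,1)})(2^j x - k)`,
supported in the dyadic interval `I^j_k = [k·2^{-j},(k+1)·2^{-j})`. -/
noncomputable def haarFn (j : ℤ) (k : ℕ) (x : ℝ) : ℝ :=
  (2:ℝ) ^ ((j : ℝ) / 2) *
    (if (2:ℝ) ^ j * x - (k : ℝ) ∈ Set.Ico (0:ℝ) (1/2) then 1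
     else if (2:ℝ) ^ j * x - (k : ℝ) ∈ Set.Ico (1/2 : ℝ) 1 then -1 else 0)

/-- The kernel associated to a sequence `Λ`:
`K(x,y) = Σ_{j∈ℤ} (Λ_{j-1} - Λ_j)·2^j·χ_{(0,2^{-j}]}(δ(x,y))`. -/
noncomputable def kernelOfLambda (Λ : ℤ → ℝ) (x y : ℝ) : ℝ :=
  ∑' j : ℤ, (Λ (j - 1) - Λ j) *
    ((2:ℝ) ^ j * (if dyadicDist x y ∈ Set.Ioc (0:ℝ) ((2:ℝ) ^ (-j)) then 1 else 0))

/-- The profile `ψ(r) = (1/r)·(Σ_{j≥1} 2^{-j} e^{-1/(2^j r)} - e^{-1/r})`. -/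
noncomputable def psiFn (r : ℝ) : ℝ :=
  (1 / r) * ((∑' j : ℕ, (2:ℝ) ^ (-(j : ℤ) - 1) * Real.exp (-((2:ℝ) ^ ((j : ℤ) + 1) * r)⁻¹)) -
    Real.exp (-r⁻¹))

lemma aux_level (x y : ℝ) (hx : 0 ≤ x) (hy : 0 ≤ y) (hxy : x ≠ y) :
    ∃ n : ℤ, dyadicDist x y = (2:ℝ) ^ (-n) ∧
      ∀ j : ℤ, ⌊(2:ℝ) ^ j * x⌋₊ = ⌊(2:ℝ) ^ j * y⌋₊ ↔ j ≤ n := by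
  set S : ℤ → Prop := fun j => ⌊(2:ℝ) ^ j * x⌋₊ = ⌊(2:ℝ) ^ j * y⌋₊ with hS
  have hstep : ∀ j, S (j + 1) → S j := by
    intro j hj
    have e : ∀ z : ℝ, (2:ℝ) ^ j * z = ((2:ℝ) ^ (j + 1) * z) / ((2:ℕ) : ℝ) := by
      intro z
      rw [zpow_add_one₀ (by norm_num)]; push_cast; ring
    simp only [hS] at hj ⊢
    rw [e x, e y, Nat.floor_div_natCast, Nat.floor_div_natCast, hj]
  have hmono : ∀ (m : ℕ) (j : ℤ), S (j + m) → S j := by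
    intro m
    induction m with
    | zero => intro j h; simpa using h
    | succ m ih =>
      intro j h
      apply ih
      apply hstep
      convert h using 1
      push_cast; ring
  have hmono' : ∀ i j : ℤ, i ≤ j → S j → S i := by
    intro i j hij h
    obtain ⟨m, rfl⟩ := Int.le.dest hij
    exact hmono m i h
  obtain ⟨N, hN⟩ := pow_unbounded_of_one_lt (max x y) (by norm_num : (1:ℝ) < 2)
  have hlow : S (-(N:ℤ)) := by
    have h1 : ∀ z : ℝ, 0 ≤ z → z ≤ max x y → ⌊(2:ℝ) ^ (-(N:ℤ)) * z⌋₊ = 0 := by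
      intro z hz hz'
      rw [Nat.floor_eq_zero, zpow_neg, zpow_natCast, inv_mul_lt_iff₀ (by positivity)]
      linarith
    simp only [hS]
    rw [h1 x hx (le_max_left _ _), h1 y hy (le_max_right _ _)]
  obtain ⟨M, hM⟩ := pow_unbounded_of_one_lt (|x - y|⁻¹) (by norm_num : (1:ℝ) < 2)
  have hpos : 0 < |x - y| := abs_pos.mpr (sub_ne_zero.mpr hxy)
  have hhigh : ¬ S (M:ℤ) := by
    intro h
    simp only [hS, zpow_natCast] at h
    have a1 := Nat.floor_le (show 0 ≤ (2:ℝ) ^ M * x by positivity)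
    have a2 := Nat.lt_floor_add_one ((2:ℝ) ^ M * x)
    have a3 := Nat.floor_le (show 0 ≤ (2:ℝ) ^ M * y by positivity)
    have a4 := Nat.lt_floor_add_one ((2:ℝ) ^ M * y)
    rw [h] at a1 a2
    have h5 : |(2:ℝ) ^ M * x - 2 ^ M * y| < 1 := by
      rw [abs_lt]; constructor <;> linarith
    rw [← mul_sub, abs_mul, abs_of_pos (by positivity)] at h5
    rw [inv_lt_iff_one_lt_mul₀ hpos] at hM
    linarith
  obtain ⟨n, hn, hmax⟩ := Int.exists_greatest_of_bdd (P := S)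
    ⟨M, fun z hz => by
      by_contra hlt
      exact hhigh (hmono' _ _ (by omega) hz)⟩ ⟨_, hlow⟩
  have hiff : ∀ j, S j ↔ j ≤ n := fun j => ⟨hmax j, fun h => hmono' _ _ h hn⟩
  refine ⟨n, ?_, hiff⟩
  have key : ∀ (j : ℤ) (k : ℕ) (z : ℝ), 0 ≤ z →
      (z ∈ Set.Ico ((k : ℝ) * (2:ℝ) ^ (-j)) (((k : ℝ) + 1) * (2:ℝ) ^ (-j)) ↔
        ⌊(2:ℝ) ^ j * z⌋₊ = k) := by
    intro j k z hz
    have hp : (0:ℝ) < 2 ^ j := by positivity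
    rw [Nat.floor_eq_iff (by positivity), Set.mem_Ico, zpow_neg, ← div_eq_mul_inv,
      ← div_eq_mul_inv, div_le_iff₀ hp, lt_div_iff₀ hp, mul_comm z]
  unfold dyadicDist
  rw [if_neg hxy]
  apply IsLeast.csInf_eq
  constructor
  · exact ⟨n, ⌊(2:ℝ) ^ n * x⌋₊, rfl, (key _ _ _ hx).2 rfl, (key _ _ _ hy).2 hn.symm⟩
  · rintro r ⟨j, k, rfl, h1, h2⟩
    rw [key _ _ _ hx] at h1
    rw [key _ _ _ hy] at h2
    have : j ≤ n := (hiff j).1 (h1.trans h2.symm)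
    exact zpow_le_zpow_right₀ (by norm_num) (by omega)

lemma aux_kernel (Λ : ℤ → ℝ) (x y : ℝ) (n : ℤ) (h : dyadicDist x y = (2:ℝ) ^ (-n)) :
    kernelOfLambda Λ x y =
      ∑' i : ℕ, (Λ (n - i - 1) - Λ (n - i)) * (2:ℝ) ^ (n - i) := by
  unfold kernelOfLambda
  rw [h]
  have hmem : ∀ j : ℤ, (2:ℝ) ^ (-n) ∈ Set.Ioc (0:ℝ) ((2:ℝ) ^ (-j)) ↔ j ≤ n := by
    intro j
    rw [Set.mem_Ioc, zpow_le_zpow_iff_right₀ (by norm_num)]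
    constructor
    · rintro ⟨_, h⟩; omega
    · intro h; exact ⟨by positivity, by omega⟩
  have hinj : Function.Injective (fun i : ℕ => n - (i:ℤ)) := by
    intro a b hab
    simp only at hab
    omega
  rw [← hinj.tsum_eq]
  · refine tsum_congr fun i => ?_
    rw [if_pos ((hmem _).2 (by omega)), mul_one]
  · intro j hj
    rw [Function.mem_support] at hj
    have : j ≤ n := by
      by_contra hc
      apply hj
      rw [if_neg (fun h => hc ((hmem _).1 h))]; simp
    exact ⟨(n - j).toNat, by simp only; omega⟩

lemma aux_zpow (n : ℤ) (i : ℕ) : (2:ℝ) ^ (n - i) = 2 ^ n * (1/2) ^ i := by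
  rw [zpow_sub₀ (by norm_num), zpow_natCast]; simp [div_eq_mul_inv]

lemma aux_summable (t : ℝ) (ht : 0 < t) (n m : ℤ) :
    Summable (fun i : ℕ => Real.exp (-t * (2:ℝ) ^ (m - i)) * (2:ℝ) ^ (n - i)) := by
  refine Summable.of_nonneg_of_le (fun i => by positivity) (fun i => ?_)
    (summable_geometric_two.mul_left ((2:ℝ) ^ n))
  rw [aux_zpow n]
  have : Real.exp (-t * (2:ℝ) ^ (m - i)) ≤ 1 := by
    rw [Real.exp_le_one_iff]
    have : 0 < t * (2:ℝ) ^ (m - i) := by positivity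
    linarith
  exact mul_le_of_le_one_left (by positivity) this

lemma aux_kernel2 (t : ℝ) (ht : 0 < t) (x y : ℝ) (n : ℤ) (h : dyadicDist x y = (2:ℝ) ^ (-n)) :
    kernelOfLambda (fun j : ℤ => Real.exp (-t * (2:ℝ) ^ j)) x y =
      (∑' i : ℕ, Real.exp (-t * (2:ℝ) ^ (n - 1 - i)) * (2:ℝ) ^ (n - 1 - i))
        - Real.exp (-t * (2:ℝ) ^ n) * (2:ℝ) ^ n := by
  rw [aux_kernel _ x y n h]
  have s1 := aux_summable t ht n (n - 1)
  have s2 := aux_summable t ht n n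
  have e1 : (∑' i : ℕ, (Real.exp (-t * (2:ℝ) ^ (n - i - 1)) - Real.exp (-t * (2:ℝ) ^ (n - i)))
      * (2:ℝ) ^ (n - i)) = (∑' i : ℕ, Real.exp (-t * (2:ℝ) ^ (n - 1 - i)) * (2:ℝ) ^ (n - i)) -
      ∑' i : ℕ, Real.exp (-t * (2:ℝ) ^ (n - i)) * (2:ℝ) ^ (n - i) := by
    rw [← s1.tsum_sub s2]
    refine tsum_congr fun i => ?_
    rw [sub_mul, show n - (i:ℤ) - 1 = n - 1 - i by ring]
  rw [e1, s2.tsum_eq_zero_add]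
  have e2 : (∑' i : ℕ, Real.exp (-t * (2:ℝ) ^ (n - 1 - i)) * (2:ℝ) ^ (n - i)) =
      2 * ∑' i : ℕ, Real.exp (-t * (2:ℝ) ^ (n - 1 - i)) * (2:ℝ) ^ (n - 1 - i) := by
    rw [← tsum_mul_left]
    refine tsum_congr fun i => ?_
    rw [show n - (i:ℤ) = (n - 1 - i) + 1 by ring, zpow_add_one₀ (by norm_num)]
    ring
  have e3 : ∀ i : ℕ, n - ((i + 1 : ℕ) : ℤ) = n - 1 - i := by
    intro i; push_cast; ring
  simp only [e3]
  rw [e2]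
  simp only [Nat.cast_zero, sub_zero]
  ring

lemma aux_sign (a : ℝ) (ha : 0 ≤ a) (k : ℕ) :
    (if a - (k : ℝ) ∈ Set.Ico (0:ℝ) (1/2) then (1:ℝ)
     else if a - (k : ℝ) ∈ Set.Ico (1/2 : ℝ) 1 then -1 else 0) =
    if k = ⌊a⌋₊ then (if ⌊2 * a⌋₊ = 2 * k then 1 else -1) else 0 := by
  have h2 : ⌊2 * a⌋₊ = 2 * k ↔ ((2 * k : ℝ) ≤ 2 * a ∧ 2 * a < 2 * k + 1) := by
    rw [Nat.floor_eq_iff (by positivity)]; push_cast; rfl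
  have h1 : k = ⌊a⌋₊ ↔ ((k : ℝ) ≤ a ∧ a < k + 1) := by
    rw [eq_comm, Nat.floor_eq_iff ha]
  simp only [h1, h2, Set.mem_Ico]
  split_ifs <;> first | rfl | (exfalso; grind)

lemma aux_floor_two (a : ℝ) (ha : 0 ≤ a) : ⌊2 * a⌋₊ = 2 * ⌊a⌋₊ ∨ ⌊2 * a⌋₊ = 2 * ⌊a⌋₊ + 1 := by
  have : ⌊a⌋₊ = ⌊2 * a⌋₊ / 2 := by
    rw [← Nat.floor_div_natCast]; congr 1; push_cast; ring
  omega

lemma aux_haar_mul (x y : ℝ) (hx : 0 ≤ x) (hy : 0 ≤ y) (n : ℤ)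
    (hn : ∀ j : ℤ, ⌊(2:ℝ) ^ j * x⌋₊ = ⌊(2:ℝ) ^ j * y⌋₊ ↔ j ≤ n) (j : ℤ) (k : ℕ) :
    haarFn j k x * haarFn j k y =
      if k = ⌊(2:ℝ) ^ j * x⌋₊ ∧ j ≤ n then (if j = n then -(2:ℝ) ^ j else 2 ^ j) else 0 := by
  have hp : (2:ℝ) ^ ((j : ℝ) / 2) * (2:ℝ) ^ ((j : ℝ) / 2) = 2 ^ j := by
    rw [← Real.rpow_add (by norm_num), add_halves, Real.rpow_intCast]
  unfold haarFn
  rw [aux_sign _ (by positivity), aux_sign _ (by positivity)]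
  have hj := hn j
  have hj1 := hn (j + 1)
  have e : ∀ z : ℝ, (2:ℝ) ^ (j + 1) * z = 2 * (2 ^ j * z) := by
    intro z; rw [zpow_add_one₀ (by norm_num)]; ring
  rw [e, e] at hj1
  have fx := aux_floor_two ((2:ℝ) ^ j * x) (by positivity)
  have fy := aux_floor_two ((2:ℝ) ^ j * y) (by positivity)
  rw [mul_mul_mul_comm, hp]
  generalize ⌊2 * ((2:ℝ) ^ j * x)⌋₊ = a at *
  generalize ⌊2 * ((2:ℝ) ^ j * y)⌋₊ = b at *
  generalize ⌊((2:ℝ) ^ j * x)⌋₊ = c at *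
  generalize ⌊((2:ℝ) ^ j * y)⌋₊ = d at *
  split_ifs <;> first | (exfalso; omega) | ring

lemma aux_haar (t : ℝ) (ht : 0 < t) (x y : ℝ) (hx : 0 ≤ x) (hy : 0 ≤ y) (n : ℤ)
    (hn : ∀ j : ℤ, ⌊(2:ℝ) ^ j * x⌋₊ = ⌊(2:ℝ) ^ j * y⌋₊ ↔ j ≤ n) :
    ∑' p : ℤ × ℕ, Real.exp (-t * (2:ℝ) ^ p.1) * haarFn p.1 p.2 x * haarFn p.1 p.2 y =
      (∑' i : ℕ, Real.exp (-t * (2:ℝ) ^ (n - 1 - i)) * (2:ℝ) ^ (n - 1 - i))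
        - Real.exp (-t * (2:ℝ) ^ n) * (2:ℝ) ^ n := by
  simp only [mul_assoc, aux_haar_mul x y hx hy n hn]
  have hinj : Function.Injective
      (fun i : ℕ => ((n - (i:ℤ), ⌊(2:ℝ) ^ (n - (i:ℤ)) * x⌋₊) : ℤ × ℕ)) := by
    intro a b hab
    simp only [Prod.mk.injEq] at hab
    omega
  rw [← hinj.tsum_eq]
  · have e3 : ∀ i : ℕ, n - ((i + 1 : ℕ) : ℤ) = n - 1 - i := by
      intro i; push_cast; ring
    have e4 : ∀ i : ℕ, ¬ (n - 1 - (i:ℤ) = n) := by intro i; omega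
    have e5 : ∀ i : ℕ, (n - 1 - (i:ℤ) ≤ n) := by intro i; omega
    rw [Summable.tsum_eq_zero_add]
    · simp only [e3, e4, e5, Nat.cast_zero, sub_zero, le_refl, and_self, if_true, if_false]
      ring
    · rw [← summable_nat_add_iff 1]
      simpa only [e3, e4, e5, and_self, if_true, if_false] using aux_summable t ht (n - 1) (n - 1)
  · rintro ⟨j, k⟩ hj
    rw [Function.mem_support] at hj
    have : k = ⌊(2:ℝ) ^ j * x⌋₊ ∧ j ≤ n := by
      by_contra hc
      apply hj
      simp only [if_neg hc, mul_zero]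
    refine ⟨(n - j).toNat, ?_⟩
    have h2 : n - ((n - j).toNat : ℤ) = j := by omega
    simp only [h2, ← this.1]

lemma aux_psi (t : ℝ) (ht : 0 < t) (n : ℤ) :
    (1 / t) * psiFn ((2:ℝ) ^ (-n) / t) =
      (∑' i : ℕ, Real.exp (-t * (2:ℝ) ^ (n - 1 - i)) * (2:ℝ) ^ (n - 1 - i))
        - Real.exp (-t * (2:ℝ) ^ n) * (2:ℝ) ^ n := by
  unfold psiFn
  have h2 : (0:ℝ) < 2 ^ n := by positivity
  have h0 : (1 / t) * (1 / ((2:ℝ) ^ (-n) / t)) = 2 ^ n := by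
    rw [zpow_neg]; field_simp
  have h1 : -((2:ℝ) ^ (-n) / t)⁻¹ = -t * 2 ^ n := by
    rw [zpow_neg]; field_simp
  rw [← mul_assoc, h0, h1, mul_sub, ← tsum_mul_left, mul_comm ((2:ℝ) ^ n) (Real.exp _)]
  congr 1
  refine tsum_congr fun i => ?_
  have h3 : (2:ℝ) ^ (n - 1 - (i:ℤ)) = 2 ^ n * 2 ^ (-(i:ℤ) - 1) := by
    rw [← zpow_add₀ (by norm_num)]; congr 1; ring
  have h4 : -((2:ℝ) ^ ((i:ℤ) + 1) * ((2:ℝ) ^ (-n) / t))⁻¹ = -t * 2 ^ (n - 1 - (i:ℤ)) := by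
    rw [h3, show -(i:ℤ) - 1 = -((i:ℤ) + 1) by ring, zpow_neg, zpow_neg]
    field_simp
  rw [h4, h3]; ring

lemma aux_exp (v : ℝ) (hv : 0 ≤ v) :
    |Real.exp (-v) - Real.exp (-(2 * v)) - v| ≤ 2 * v ^ 2 := by
  have h1 := Real.add_one_le_exp (-v)
  have h2 := Real.add_one_le_exp v
  have h3 := Real.add_one_le_exp (-(2 * v))
  have h4 : Real.exp (-(2 * v)) = Real.exp (-v) * Real.exp (-v) := by
    rw [← Real.exp_add]; congr 1; ring
  have h5 : Real.exp v * Real.exp (-v) = 1 := by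
    rw [← Real.exp_add]; simp
  have h6 : Real.exp (-v) ≤ 1 := by simpa using hv
  have h7 := Real.exp_pos (-v)
  have h8 : (v + 1) * Real.exp (-v) ≤ 1 := by
    exact (mul_le_mul_of_nonneg_right h2 h7.le).trans h5.le
  rw [abs_le]
  rw [h4] at h3 ⊢
  generalize Real.exp (-v) = w at *
  constructor
  · nlinarith [mul_le_mul_of_nonneg_right h8 h7.le]
  · nlinarith [mul_nonneg hv hv]

lemma aux_limit (t : ℝ) (ht : 0 < t) (x y : ℝ) (n : ℤ) (h : dyadicDist x y = (2:ℝ) ^ (-n)) :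
    |dyadicDist x y ^ 2 * kernelOfLambda (fun j : ℤ => Real.exp (-t * (2:ℝ) ^ j)) x y -
        2 / 3 * t| ≤ t ^ 2 / dyadicDist x y := by
  rw [aux_kernel _ x y n h, h, ← tsum_mul_left]
  have hP : (0:ℝ) < 2 ^ n := by positivity
  have hs : HasSum (fun i : ℕ => (t / 2) * ((1/4 : ℝ)) ^ i) (2 / 3 * t) := by
    have := (hasSum_geometric_of_lt_one (r := (1/4:ℝ)) (by norm_num) (by norm_num)).mul_left (t / 2)
    have e : 2 / 3 * t = t / 2 * (1 - 1 / 4)⁻¹ := by norm_num; ring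
    rw [e]; exact this
  have hb : HasSum (fun i : ℕ => (t ^ 2 * 2 ^ n / 2) * ((1/2 : ℝ)) ^ i) (t ^ 2 / 2 ^ (-n)) := by
    have := hasSum_geometric_two.mul_left (t ^ 2 * (2:ℝ) ^ n / 2)
    have e : t ^ 2 / (2:ℝ) ^ (-n) = t ^ 2 * (2:ℝ) ^ n / 2 * 2 := by
      rw [zpow_neg]; field_simp
    rw [e]; exact this
  set f : ℕ → ℝ := fun i => ((2:ℝ) ^ (-n)) ^ 2 *
    ((Real.exp (-t * (2:ℝ) ^ (n - i - 1)) - Real.exp (-t * (2:ℝ) ^ (n - i))) * 2 ^ (n - i)) with hf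
  have hbd : ∀ i, ‖f i - (t / 2) * ((1/4 : ℝ)) ^ i‖ ≤ (t ^ 2 * 2 ^ n / 2) * ((1/2 : ℝ)) ^ i := by
    intro i
    have hq0 : (0:ℝ) < (1/2) ^ i := by positivity
    have hq1 : ((1:ℝ)/2) ^ i ≤ 1 := pow_le_one₀ (by norm_num) (by norm_num)
    have h4 : ((1:ℝ)/4) ^ i = (1/2) ^ i * (1/2) ^ i := by
      rw [← mul_pow]; norm_num
    have e1 : -t * (2:ℝ) ^ (n - i - 1) = -(t * 2 ^ n * (1/2) ^ i / 2) := by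
      rw [zpow_sub_one₀ (by norm_num), aux_zpow]; ring
    have e2 : -t * (2:ℝ) ^ (n - i) = -(2 * (t * 2 ^ n * (1/2) ^ i / 2)) := by
      rw [aux_zpow]; ring
    have key := aux_exp (t * 2 ^ n * (1/2) ^ i / 2) (by positivity)
    simp only [hf]
    rw [e1, e2, aux_zpow, h4, zpow_neg, Real.norm_eq_abs]
    generalize Real.exp (-(t * 2 ^ n * (1/2) ^ i / 2)) -
      Real.exp (-(2 * (t * 2 ^ n * (1/2) ^ i / 2))) = E at *
    generalize ((1:ℝ)/2) ^ i = q at *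
    generalize (2:ℝ) ^ n = P at *
    have : (P⁻¹) ^ 2 * (E * (P * q)) - t / 2 * (q * q) = (q / P) * (E - t * P * q / 2) := by
      field_simp
    rw [this, abs_mul, abs_of_pos (by positivity)]
    calc q / P * |E - t * P * q / 2| ≤ q / P * (2 * (t * P * q / 2) ^ 2) := by gcongr
      _ = (t ^ 2 * P / 2 * q) * (q * q) := by field_simp
      _ ≤ (t ^ 2 * P / 2 * q) * 1 := by
        gcongr
        nlinarith
      _ = _ := by ring
  have hd : Summable (fun i => f i - (t / 2) * ((1/4 : ℝ)) ^ i) :=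
    Summable.of_norm_bounded hb.summable hbd
  have hfs : Summable f := by
    have := hd.add hs.summable
    simpa using this
  rw [← hs.tsum_eq, ← hfs.tsum_sub hs.summable]
  exact tsum_of_norm_bounded hb hbd

/-- Lemma 8: for `t > 0`, the kernel `K_t ∈ 𝒦` associated to the decreasing sequence
`Λ^{(t)}_j = e^{-t·2^j}` (equivalently, `K_t(x,y) = Σ_{h∈ℋ} e^{-t·2^{j(h)}} h(x)h(y)` for
`x ≠ y`) satisfies `K_t(x,y) = (1/t)·ψ(δ(x,y)/t)`, and consequently
`δ(x,y)² K_t(x,y) → (2/3)·t` as `δ(x,y) → +∞`. -/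
theorem Kt_kernel_stability (t : ℝ) (ht : 0 < t) :
    (∀ x y : ℝ, 0 ≤ x → 0 ≤ y → x ≠ y →
      kernelOfLambda (fun j : ℤ => Real.exp (-t * (2:ℝ) ^ j)) x y =
        ∑' p : ℤ × ℕ, Real.exp (-t * (2:ℝ) ^ p.1) * haarFn p.1 p.2 x * haarFn p.1 p.2 y) ∧
    (∀ x y : ℝ, 0 ≤ x → 0 ≤ y → x ≠ y →
      kernelOfLambda (fun j : ℤ => Real.exp (-t * (2:ℝ) ^ j)) x y =
        (1 / t) * psiFn (dyadicDist x y / t)) ∧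
    (∀ ε : ℝ, 0 < ε → ∃ R : ℝ, ∀ x y : ℝ, 0 ≤ x → 0 ≤ y → R ≤ dyadicDist x y →
      |dyadicDist x y ^ 2 * kernelOfLambda (fun j : ℤ => Real.exp (-t * (2:ℝ) ^ j)) x y -
        2 / 3 * t| < ε) := by
  refine ⟨?_, ?_, ?_⟩
  · intro x y hx hy hxy
    obtain ⟨n, h, hn⟩ := aux_level x y hx hy hxy
    rw [aux_kernel2 t ht x y n h, aux_haar t ht x y hx hy n hn]
  · intro x y hx hy hxy
    obtain ⟨n, h, hn⟩ := aux_level x y hx hy hxy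
    rw [aux_kernel2 t ht x y n h, h, aux_psi t ht n]
  · intro ε hε
    refine ⟨t ^ 2 / ε + 1, ?_⟩
    intro x y hx hy hR
    have h0 : 0 < t ^ 2 / ε := by positivity
    have hxy : x ≠ y := by
      intro hxy
      have : dyadicDist x y = 0 := by simp [dyadicDist, hxy]
      linarith
    obtain ⟨n, h, hn⟩ := aux_level x y hx hy hxy
    refine (aux_limit t ht x y n h).trans_lt ?_
    rw [div_lt_iff₀ (by linarith), mul_comm, ← div_lt_iff₀ hε]
    linarith
end

section
/- Let K₁, K₂ ∈ 𝒦 with associated sequences (α¹_j, Λ¹_j) and (α²_j, Λ²_j). Then K₃(x,y) = ∫_{ℝ⁺} K₁(x,z) K₂(z,y) dz is well defined, K₃ ∈ 𝒦, and its associated sequences satisfy α³_j = α¹_j Λ²_j + α²_j Λ¹_j + α¹_j α²_j and Λ³_j = Λ¹_j Λ²_j for every j ∈ ℤ. -/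
open MeasureTheory Set Filter
open scoped ENNReal

/-- the two points lie in the same dyadic interval of length `2^n` -/
def SameD (n : ℤ) (x y : ℝ) : Prop := ⌊x * (2:ℝ) ^ (-n)⌋ = ⌊y * (2:ℝ) ^ (-n)⌋

def LevD (n : ℤ) (x y : ℝ) : Prop := SameD n x y ∧ ¬ SameD (n-1) x y

lemma floor_half (n : ℤ) (x : ℝ) :
    ⌊x * (2:ℝ) ^ (-n)⌋ = ⌊x * (2:ℝ) ^ (-(n-1))⌋ / 2 := by
  have h : x * (2:ℝ) ^ (-n) = x * (2:ℝ) ^ (-(n-1)) / 2 := by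
    rw [show -(n-1) = -n + 1 by ring, zpow_add₀ (by norm_num), zpow_one]; ring
  rw [h]
  set u := x * (2:ℝ) ^ (-(n-1))
  have h1 := Int.floor_le u
  have h2 := Int.lt_floor_add_one u
  have h3 : 2 * (⌊u⌋ / 2) ≤ ⌊u⌋ := by omega
  have h4 : ⌊u⌋ + 1 ≤ 2 * (⌊u⌋ / 2) + 2 := by omega
  rw [Int.floor_eq_iff]
  have h3' : (2:ℝ) * ((⌊u⌋ / 2 : ℤ) : ℝ) ≤ (⌊u⌋ : ℝ) := by exact_mod_cast h3
  have h4' : (⌊u⌋ : ℝ) + 1 ≤ 2 * ((⌊u⌋ / 2 : ℤ) : ℝ) + 2 := by exact_mod_cast h4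
  constructor <;> linarith

lemma SameD.succ {n : ℤ} {x y : ℝ} (h : SameD (n-1) x y) : SameD n x y := by
  unfold SameD at *
  rw [floor_half, floor_half n y, h]

lemma SameD.mono {n m : ℤ} {x y : ℝ} (h : SameD n x y) (hnm : n ≤ m) : SameD m x y := by
  induction m, hnm using Int.leInduction with
  | base => exact h
  | succ k _ ih => exact SameD.succ (by simpa using ih)

lemma SameD.symm {n : ℤ} {x y : ℝ} (h : SameD n x y) : SameD n y x := Eq.symm h
lemma SameD.trans {n : ℤ} {x y z : ℝ} (h : SameD n x y) (h' : SameD n y z) : SameD n x z :=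
  Eq.trans h h'
lemma SameD.refl (n : ℤ) (x : ℝ) : SameD n x x := rfl

lemma SameD.three {n : ℤ} {x y z : ℝ} (h : SameD n x y) (h' : SameD n x z)
    (h1 : ¬ SameD (n-1) x y) : SameD (n-1) x z ∨ SameD (n-1) y z := by
  unfold SameD at *
  rw [floor_half, floor_half n y] at h
  rw [floor_half, floor_half n z] at h'
  omega

lemma LevD.symm {n : ℤ} {x y : ℝ} (h : LevD n x y) : LevD n y x :=
  ⟨h.1.symm, fun h' => h.2 h'.symm⟩

lemma LevD.ne {n : ℤ} {x y : ℝ} (h : LevD n x y) : x ≠ y := by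
  rintro rfl; exact h.2 rfl

lemma LevD.unique {n m : ℤ} {x y : ℝ} (h : LevD n x y) (h' : LevD m x y) : n = m := by
  rcases lt_trichotomy n m with h1 | h1 | h1
  · exact absurd (h.1.mono (by omega)) h'.2
  · exact h1
  · exact absurd (h'.1.mono (by omega)) h.2

/-- a point at level `n` from `x` lies in the `2^m` interval of `x` iff `n ≤ m` -/
lemma LevD.same_iff {n m : ℤ} {x y : ℝ} (h : LevD n x y) : SameD m x y ↔ n ≤ m := by
  constructor
  · intro h'
    by_contra hc
    exact h.2 (h'.mono (by omega))
  · intro h'; exact h.1.mono h'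

lemma mem_Ico_iff_floor (n : ℤ) (x : ℝ) (k : ℤ) :
    x ∈ Set.Ico ((k : ℝ) * (2:ℝ) ^ n) (((k : ℝ) + 1) * (2:ℝ) ^ n) ↔ ⌊x * (2:ℝ) ^ (-n)⌋ = k := by
  have h : (0:ℝ) < 2 ^ n := by positivity
  rw [Int.floor_eq_iff, zpow_neg, ← div_eq_mul_inv, le_div_iff₀ h, div_lt_iff₀ h, Set.mem_Ico]

lemma exists_levD {x y : ℝ} (hx : 0 ≤ x) (hy : 0 ≤ y) (hxy : x ≠ y) : ∃ n, LevD n x y := by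
  have hpos : 0 < |x - y| := abs_pos.mpr (sub_ne_zero.mpr hxy)
  obtain ⟨b, hb, -⟩ := exists_mem_Ico_zpow hpos (one_lt_two (α := ℝ))
  obtain ⟨N, hN⟩ := pow_unbounded_of_one_lt (max x y) (one_lt_two (α := ℝ))
  have key := Int.exists_least_of_bdd (P := fun n => SameD n x y) ?_ ?_
  · obtain ⟨n, h1, h2⟩ := key
    exact ⟨n, h1, fun h => by have := h2 _ h; omega⟩
  · refine ⟨b, fun z hz => ?_⟩
    have h1 := Int.abs_sub_lt_one_of_floor_eq_floor hz
    rw [← sub_mul, abs_mul, abs_of_pos (show (0:ℝ) < 2 ^ (-z) by positivity), zpow_neg,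
      ← div_eq_mul_inv, div_lt_one (by positivity)] at h1
    exact ((zpow_lt_zpow_iff_right₀ (one_lt_two (α := ℝ))).1 (hb.trans_lt h1)).le
  · refine ⟨N, ?_⟩
    have hx' := (mem_Ico_iff_floor N x 0).1 (by
      simp only [Int.cast_zero, zero_mul, zero_add, one_mul, zpow_natCast]
      exact ⟨hx, (le_max_left _ _).trans_lt hN⟩)
    have hy' := (mem_Ico_iff_floor N y 0).1 (by
      simp only [Int.cast_zero, zero_mul, zero_add, one_mul, zpow_natCast]
      exact ⟨hy, (le_max_right _ _).trans_lt hN⟩)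
    exact hx'.trans hy'.symm

lemma LevD.dist {n : ℤ} {x y : ℝ} (hx : 0 ≤ x) (h : LevD n x y) :
    dyadicDist x y = (2:ℝ) ^ n := by
  unfold dyadicDist
  rw [if_neg h.ne]
  apply IsLeast.csInf_eq
  constructor
  · have h0 : 0 ≤ ⌊x * (2:ℝ) ^ (-n)⌋ := Int.floor_nonneg.2 (by positivity)
    refine ⟨-n, ⌊x * (2:ℝ) ^ (-n)⌋.toNat, by simp, ?_, ?_⟩
    · have := (mem_Ico_iff_floor n x ⌊x * (2:ℝ) ^ (-n)⌋).2 rfl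
      rw [neg_neg]
      rw [← Int.toNat_of_nonneg h0] at this
      exact_mod_cast this
    · have := (mem_Ico_iff_floor n y ⌊x * (2:ℝ) ^ (-n)⌋).2 h.1.symm
      rw [neg_neg]
      rw [← Int.toNat_of_nonneg h0] at this
      exact_mod_cast this
  · rintro r ⟨j, k, rfl, h1, h2⟩
    have h1' := (mem_Ico_iff_floor (-j) x k).1 (by exact_mod_cast h1)
    have h2' := (mem_Ico_iff_floor (-j) y k).1 (by exact_mod_cast h2)
    have : SameD (-j) x y := h1'.trans h2'.symm
    exact zpow_le_zpow_right₀ (by norm_num) (h.same_iff.1 this)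

lemma levD_of_dist {n : ℤ} {x y : ℝ} (hx : 0 ≤ x) (hy : 0 ≤ y)
    (h : dyadicDist x y = (2:ℝ) ^ n) : LevD n x y := by
  have hxy : x ≠ y := by
    rintro rfl
    have h0 : (0:ℝ) < 2 ^ n := by positivity
    simp [dyadicDist] at h
    linarith
  obtain ⟨m, hm⟩ := exists_levD hx hy hxy
  have := hm.dist hx
  rw [h] at this
  have := zpow_right_injective₀ (a := (2:ℝ)) (by norm_num) (by norm_num) this
  exact this ▸ hm

/-- the dyadic interval of length `2^n` around `x` -/
def ballD (n : ℤ) (x : ℝ) : Set ℝ := {z | SameD n x z}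

lemma ballD_eq (n : ℤ) (x : ℝ) : ballD n x =
    Set.Ico ((⌊x * (2:ℝ) ^ (-n)⌋ : ℝ) * (2:ℝ) ^ n) (((⌊x * (2:ℝ) ^ (-n)⌋ : ℝ) + 1) * (2:ℝ) ^ n) := by
  ext z
  rw [mem_Ico_iff_floor]
  exact eq_comm

lemma measurableSet_ballD (n : ℤ) (x : ℝ) : MeasurableSet (ballD n x) := by
  rw [ballD_eq]; exact measurableSet_Ico

lemma volume_ballD (n : ℤ) (x : ℝ) : volume (ballD n x) = ENNReal.ofReal ((2:ℝ)^n) := by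
  rw [ballD_eq, Real.volume_Ico]; congr 1; ring

lemma ballD_subset (n : ℤ) {x : ℝ} (hx : 0 ≤ x) : ballD n x ⊆ Set.Ici 0 := by
  rw [ballD_eq]
  intro z hz
  have h0 : 0 ≤ ⌊x * (2:ℝ) ^ (-n)⌋ := Int.floor_nonneg.2 (by positivity)
  have h1 : (0:ℝ) ≤ (⌊x * (2:ℝ) ^ (-n)⌋ : ℝ) := by exact_mod_cast h0
  have : (0:ℝ) ≤ (⌊x * (2:ℝ) ^ (-n)⌋ : ℝ) * (2:ℝ) ^ n := by positivity
  exact this.trans hz.1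

def annD (n : ℤ) (x : ℝ) : Set ℝ := ballD n x \ ballD (n-1) x

lemma mem_annD {n : ℤ} {x z : ℝ} : z ∈ annD n x ↔ LevD n x z := Iff.rfl

lemma measurableSet_annD (n : ℤ) (x : ℝ) : MeasurableSet (annD n x) :=
  (measurableSet_ballD _ _).diff (measurableSet_ballD _ _)

noncomputable def wD (n : ℤ) : ℝ≥0∞ := ENNReal.ofReal ((2:ℝ)^(n-1))

lemma volume_annD (n : ℤ) (x : ℝ) : volume (annD n x) = wD n := by
  have hs : ballD (n-1) x ⊆ ballD n x := fun z hz => SameD.succ hz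
  unfold annD wD
  rw [measure_sdiff hs (measurableSet_ballD _ _).nullMeasurableSet
    (by rw [volume_ballD]; exact ENNReal.ofReal_ne_top), volume_ballD, volume_ballD,
    ← ENNReal.ofReal_sub _ (by positivity)]
  congr 1
  rw [zpow_sub₀ (by norm_num)]; norm_num; ring

lemma wD_ne_zero (n : ℤ) : wD n ≠ 0 := by
  unfold wD; simp only [ne_eq, ENNReal.ofReal_eq_zero, not_le]; positivity

lemma restrict_Ici_eq {x : ℝ} (hx : 0 ≤ x) :
    (volume.restrict (Set.Ici (0:ℝ))) = volume.restrict (⋃ n : ℤ, annD n x) := by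
  apply Measure.restrict_congr_set
  have : (⋃ n : ℤ, annD n x) = Set.Ici 0 \ {x} := by
    ext z
    simp only [Set.mem_iUnion, mem_annD, Set.mem_sdiff, Set.mem_singleton_iff]
    constructor
    · rintro ⟨n, hn⟩
      exact ⟨ballD_subset n hx hn.1, hn.ne.symm⟩
    · rintro ⟨h1, h2⟩
      exact exists_levD hx h1 (Ne.symm h2)
  rw [this]
  exact (sdiff_null_ae_eq_self (by simp)).symm

lemma radial_aem {β : Type*} [MeasurableSpace β] {x : ℝ} (hx : 0 ≤ x) (G : ℝ → β) (g : ℤ → β)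
    (h : ∀ m z, 0 ≤ z → LevD m x z → G z = g m) :
    AEMeasurable G (volume.restrict (Set.Ici (0:ℝ))) := by
  rw [restrict_Ici_eq hx, aemeasurable_iUnion_iff]
  intro m
  refine (aemeasurable_const (b := g m)).congr ?_
  filter_upwards [ae_restrict_mem (measurableSet_annD m x)] with z hz
  exact (h m z (ballD_subset m hx hz.1) hz).symm

lemma radial_lint {x : ℝ} (hx : 0 ≤ x) (G : ℝ → ℝ≥0∞) (g : ℤ → ℝ≥0∞)
    (h : ∀ m z, 0 ≤ z → LevD m x z → G z = g m) :
    ∫⁻ z in Set.Ici (0:ℝ), G z = ∑' m, g m * wD m := by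
  rw [restrict_Ici_eq hx, lintegral_iUnion (fun n => measurableSet_annD n x)]
  · congr 1; ext m
    rw [setLIntegral_congr_fun (g := fun _ => g m) (measurableSet_annD m x), setLIntegral_const, volume_annD]
    intro z hz
    exact h m z (ballD_subset m hx hz.1) hz
  · intro n m hnm
    refine Set.disjoint_left.2 fun z h1 h2 => hnm ?_
    exact LevD.unique h1 h2

lemma tsum_wD_lt (m : ℤ) : ∑' n : ℤ, (if n < m then (1:ℝ≥0∞) else 0) * wD n = wD m := by
  classical
  rw [← radial_lint (x := 0) le_rfl ((ballD (m-1) 0).indicator (fun _ => 1))]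
  · rw [lintegral_indicator (measurableSet_ballD _ _), setLIntegral_const,
      Measure.restrict_apply (measurableSet_ballD _ _),
      Set.inter_eq_left.2 (ballD_subset _ le_rfl), volume_ballD, one_mul, wD]
  · intro n z _ h
    have : z ∈ ballD (m-1) 0 ↔ n < m := (h.same_iff (m := m-1)).trans (by omega)
    simp only [Set.indicator_apply, this]

/-- The (extended) level values of the convolution. -/
noncomputable def conv3 (A B : ℤ → ℝ≥0∞) (n : ℤ) : ℝ≥0∞ :=
  ∑' m, (if m < n then A m * B n else 0) * wD m + ∑' m, (if m < n then A n * B m else 0) * wD m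
    + ∑' m, (if n < m then A m * B m else 0) * wD m

lemma conv3_sum (A B : ℤ → ℝ≥0∞) :
    ∑' n, conv3 A B n * wD n = (∑' n, A n * wD n) * (∑' n, B n * wD n) := by
  have h3 : ∑' n, (∑' m, (if n < m then A m * B m else 0) * wD m) * wD n =
      ∑' n, (∑' m, (if m = n then A m * B n else 0) * wD m) * wD n := by
    simp_rw [← ENNReal.tsum_mul_right]
    rw [ENNReal.tsum_comm]
    congr 1; ext m
    have : ∀ n, (if n < m then A m * B m else 0) * wD m * wD n =
      (A m * B m * wD m) * ((if n < m then (1:ℝ≥0∞) else 0) * wD n) := by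
      intro n; split_ifs <;> ring
    simp_rw [this]
    rw [ENNReal.tsum_mul_left, tsum_wD_lt]
    rw [tsum_eq_single m]
    · simp
    · intro n hn; simp [hn]
  have h2 : ∑' n, (∑' m, (if m < n then A n * B m else 0) * wD m) * wD n =
      ∑' n, (∑' m, (if n < m then A m * B n else 0) * wD m) * wD n := by
    simp_rw [← ENNReal.tsum_mul_right]
    rw [ENNReal.tsum_comm]
    congr 1; ext m; congr 1; ext n; ring
  unfold conv3
  simp_rw [add_mul]
  rw [ENNReal.tsum_add, ENNReal.tsum_add, h2, h3, ← ENNReal.tsum_add, ← ENNReal.tsum_add,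
    ← ENNReal.tsum_mul_left]
  congr 1; ext n
  rw [← add_mul, ← add_mul, ← ENNReal.tsum_add, ← ENNReal.tsum_add, ← mul_assoc]
  refine congrArg (· * wD n) ?_
  rw [← ENNReal.tsum_mul_right]
  congr 1; ext m
  rcases lt_trichotomy m n with h | h | h
  · simp [h, h.ne, h.not_gt]; ring
  · simp [h]; ring
  · simp [h, h.ne', h.not_gt]; ring

noncomputable def SP (k : ℤ → ℝ) (n : ℤ) : ℝ := ∑' m : ℤ, if m < n then k m * (2:ℝ)^(m-1) else 0

lemma ofReal_wD {a : ℝ} (ha : 0 ≤ a) (n : ℤ) :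
    ENNReal.ofReal a * wD n = ENNReal.ofReal (a * (2:ℝ)^(n-1)) := by
  rw [wD, ENNReal.ofReal_mul ha]

section
variable {k : ℤ → ℝ}

lemma summ_k (hk0 : ∀ n, 0 ≤ k n) (hk1 : ∑' n, ENNReal.ofReal (k n) * wD n = 1) :
    Summable (fun n => k n * (2:ℝ)^(n-1)) := by
  have h : ∑' n, ENNReal.ofReal (k n) * wD n ≠ ⊤ := by rw [hk1]; simp
  have := ENNReal.summable_toReal h
  refine this.congr fun n => ?_
  rw [ofReal_wD (hk0 n), ENNReal.toReal_ofReal]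
  have := hk0 n
  positivity

lemma summ_SP (hk0 : ∀ n, 0 ≤ k n) (hk1 : ∑' n, ENNReal.ofReal (k n) * wD n = 1) (n : ℤ) :
    Summable (fun m => if m < n then k m * (2:ℝ)^(m-1) else 0) := by
  have := (summ_k hk0 hk1).indicator {m | m < n}
  exact this.congr fun m => by simp [Set.indicator_apply]

lemma SP_nonneg (hk0 : ∀ n, 0 ≤ k n) (n : ℤ) : 0 ≤ SP k n := by
  refine tsum_nonneg fun m => ?_
  have := hk0 m
  split_ifs <;> positivity

lemma SP_succ (hk0 : ∀ n, 0 ≤ k n) (hk1 : ∑' n, ENNReal.ofReal (k n) * wD n = 1) (n : ℤ) :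
    SP k (n+1) = SP k n + k n * (2:ℝ)^(n-1) := by
  have h1 := (summ_SP hk0 hk1 n).hasSum
  have h2 := hasSum_ite_eq n (k n * (2:ℝ)^(n-1))
  have h3 := (h1.add h2).tsum_eq
  unfold SP
  rw [← h3]
  congr 1; ext m
  rcases lt_trichotomy m n with h | h | h
  · simp [h, h.ne, show m < n + 1 by omega]
  · simp [h]
  · simp [h.ne', h.not_gt, show ¬ m < n + 1 by omega]

lemma SP_tendsto (hk0 : ∀ n, 0 ≤ k n) (hk1 : ∑' n, ENNReal.ofReal (k n) * wD n = 1) :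
    Tendsto (SP k) atBot (nhds 0) := by
  have := tendsto_tsum_of_dominated_convergence (𝓕 := (atBot : Filter ℤ))
    (f := fun n m => if m < n then k m * (2:ℝ)^(m-1) else 0) (g := fun _ => 0)
    (summ_k hk0 hk1) ?_ ?_
  · rw [tsum_zero] at this
    exact this
  · intro m
    refine tendsto_const_nhds.congr' ?_
    filter_upwards [eventually_le_atBot m] with n hn
    simp [hn.not_gt]
  · filter_upwards with n m
    have h0 : 0 ≤ k m * (2:ℝ)^(m-1) := by have := hk0 m; positivity
    split_ifs
    · rw [Real.norm_of_nonneg h0]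
    · simpa using h0

lemma SP_ofReal (hk0 : ∀ n, 0 ≤ k n) (hk1 : ∑' n, ENNReal.ofReal (k n) * wD n = 1) (n : ℤ) :
    ∑' m, (if m < n then ENNReal.ofReal (k m) else 0) * wD m = ENNReal.ofReal (SP k n) := by
  unfold SP
  rw [ENNReal.ofReal_tsum_of_nonneg _ (summ_SP hk0 hk1 n)]
  · congr 1; ext m
    split_ifs
    · exact ofReal_wD (hk0 m) m
    · simp
  · intro m
    have := hk0 m
    split_ifs <;> positivity

noncomputable def QL (k : ℤ → ℝ) (j : ℤ) : ℝ := SP k (-j) - k (-j) * (2:ℝ)^(-j-1)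

lemma alpha_eq (hk0 : ∀ n, 0 ≤ k n) (hk1 : ∑' n, ENNReal.ofReal (k n) * wD n = 1) (j : ℤ) :
    alphaOf k j = QL k (j-1) - QL k j := by
  unfold alphaOf QL
  rw [show -(j-1) = -j+1 by ring, SP_succ hk0 hk1, show -j+1-1 = -j by ring,
    zpow_sub₀ (by norm_num) (-j) 1]
  ring

lemma QL_tendsto (hk0 : ∀ n, 0 ≤ k n) (hk1 : ∑' n, ENNReal.ofReal (k n) * wD n = 1) :
    Tendsto (QL k) atTop (nhds 0) := by
  have h1 := (SP_tendsto hk0 hk1).comp (tendsto_neg_atTop_atBot (G := ℤ))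
  have h2 : Tendsto (fun j : ℤ => -j + 1) atTop atBot :=
    tendsto_atBot_add_const_right _ _ tendsto_neg_atTop_atBot
  have h3 := (SP_tendsto hk0 hk1).comp h2
  have := h1.sub (h3.sub h1)
  simp only [sub_zero] at this
  refine this.congr fun j => ?_
  simp only [Function.comp, QL, SP_succ hk0 hk1]
  ring

lemma Lambda_eq (hk0 : ∀ n, 0 ≤ k n) (hk1 : ∑' n, ENNReal.ofReal (k n) * wD n = 1) (j : ℤ) :
    LambdaOf k j = QL k j := by
  have hf := summ_k hk0 hk1
  have hs : Summable (alphaOf k) := by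
    have h1 := (hf.comp_injective (neg_injective (G := ℤ))).mul_left 2
    have h2 := hf.comp_injective (i := fun j : ℤ => -j + 1) (fun a b h => by simpa using h)
    refine (h1.sub h2).congr fun j => ?_
    simp only [Function.comp, alphaOf]
    rw [show -j+1-1 = -j by ring, zpow_sub₀ (by norm_num) (-j) 1]
    ring
  have hs' : Summable (fun m : ℕ => alphaOf k (j + 1 + m)) :=
    hs.comp_injective (i := fun m : ℕ => j + 1 + (m:ℤ)) (fun a b h => by simpa using h)
  have ht := hs'.hasSum.tendsto_sum_nat
  have hp : ∀ M : ℕ, ∑ m ∈ Finset.range M, alphaOf k (j + 1 + m) = QL k j - QL k (j + M) := by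
    intro M
    induction M with
    | zero => simp
    | succ M ih =>
      rw [Finset.sum_range_succ, ih, alpha_eq hk0 hk1, show j + 1 + (M:ℤ) - 1 = j + M by ring]
      push_cast
      rw [show j + 1 + (M:ℤ) = j + (M + 1) by ring]
      ring
  have hlim : Tendsto (fun M : ℕ => QL k j - QL k (j + M)) atTop (nhds (QL k j)) := by
    have : Tendsto (fun M : ℕ => j + (M:ℤ)) atTop atTop :=
      tendsto_atTop_add_const_left _ _ tendsto_natCast_atTop_atTop
    simpa using ((QL_tendsto hk0 hk1).comp this).const_sub (QL k j)
  simp_rw [hp] at ht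
  exact tendsto_nhds_unique ht hlim

end

/-- Algebraic part of the theorem. -/
lemma seq_part {k₁ k₂ k₃ : ℤ → ℝ} (h10 : ∀ n, 0 ≤ k₁ n) (h20 : ∀ n, 0 ≤ k₂ n)
    (h1 : ∑' n, ENNReal.ofReal (k₁ n) * wD n = 1) (h2 : ∑' n, ENNReal.ofReal (k₂ n) * wD n = 1)
    (h30 : ∀ n, 0 ≤ k₃ n)
    (h3 : ∀ n, ENNReal.ofReal (k₃ n) =
      conv3 (fun m => ENNReal.ofReal (k₁ m)) (fun m => ENNReal.ofReal (k₂ m)) n) :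
    (∀ j : ℤ, alphaOf k₃ j =
        alphaOf k₁ j * LambdaOf k₂ j + alphaOf k₂ j * LambdaOf k₁ j +
          alphaOf k₁ j * alphaOf k₂ j) ∧
      (∀ j : ℤ, LambdaOf k₃ j = LambdaOf k₁ j * LambdaOf k₂ j) := by
  have hs3 : ∑' n, ENNReal.ofReal (k₃ n) * wD n = 1 := by
    simp_rw [h3]
    rw [conv3_sum, h1, h2, one_mul]
  set T : ℤ → ℝ≥0∞ := fun n =>
    ∑' m, (if n < m then ENNReal.ofReal (k₁ m) * ENNReal.ofReal (k₂ m) else 0) * wD m with hT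
  have e3 : ∀ n, ENNReal.ofReal (k₃ n) =
      ENNReal.ofReal (SP k₁ n * k₂ n + k₁ n * SP k₂ n) + T n := by
    intro n
    rw [h3, ENNReal.ofReal_add (mul_nonneg (SP_nonneg h10 n) (h20 n))
      (mul_nonneg (h10 n) (SP_nonneg h20 n)), ENNReal.ofReal_mul (SP_nonneg h10 n),
      ENNReal.ofReal_mul (h10 n), ← SP_ofReal h10 h1, ← SP_ofReal h20 h2,
      ← ENNReal.tsum_mul_left, ← ENNReal.tsum_mul_right, conv3]
    congr 3
    · ext m; split_ifs <;> ring
    · ext m; split_ifs <;> ring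
  have hTfin : ∀ n, T n ≠ ⊤ := by
    intro n h
    have := e3 n
    rw [h, add_top] at this
    exact ENNReal.ofReal_ne_top this
  have r3 : ∀ n, k₃ n = SP k₁ n * k₂ n + k₁ n * SP k₂ n + (T n).toReal := by
    intro n
    have h := congrArg ENNReal.toReal (e3 n)
    have hn : 0 ≤ SP k₁ n * k₂ n + k₁ n * SP k₂ n :=
      add_nonneg (mul_nonneg (SP_nonneg h10 n) (h20 n)) (mul_nonneg (h10 n) (SP_nonneg h20 n))
    rwa [ENNReal.toReal_add ENNReal.ofReal_ne_top (hTfin n), ENNReal.toReal_ofReal (h30 n),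
      ENNReal.toReal_ofReal hn] at h
  have hTs : ∀ n, (T n).toReal = (T (n+1)).toReal + k₁ (n+1) * k₂ (n+1) * (2:ℝ)^n := by
    intro n
    have : T n = T (n+1) + ENNReal.ofReal (k₁ (n+1) * k₂ (n+1) * (2:ℝ)^n) := by
      have hw : ENNReal.ofReal (k₁ (n+1) * k₂ (n+1) * (2:ℝ)^n) =
          ENNReal.ofReal (k₁ (n+1)) * ENNReal.ofReal (k₂ (n+1)) * wD (n+1) := by
        rw [ENNReal.ofReal_mul (mul_nonneg (h10 _) (h20 _)), ENNReal.ofReal_mul (h10 _), wD]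
        simp
      rw [hw, ← tsum_ite_eq (n+1)
        (fun m => ENNReal.ofReal (k₁ m) * ENNReal.ofReal (k₂ m) * wD m), hT]
      simp only
      rw [← ENNReal.tsum_add]
      congr 1; ext m
      rcases lt_trichotomy m (n+1) with h | h | h
      · simp [h.ne, h.not_gt, show ¬ n < m by omega]
      · simp [h]
      · simp [h.ne', h, show n < m by omega]
    rw [this, ENNReal.toReal_add (hTfin _) ENNReal.ofReal_ne_top, ENNReal.toReal_ofReal]
    exact mul_nonneg (mul_nonneg (h10 _) (h20 _)) (by positivity)
  have hal : ∀ j : ℤ, alphaOf k₃ j =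
        alphaOf k₁ j * LambdaOf k₂ j + alphaOf k₂ j * LambdaOf k₁ j +
          alphaOf k₁ j * alphaOf k₂ j := by
    intro j
    rw [Lambda_eq h10 h1, Lambda_eq h20 h2]
    unfold alphaOf QL
    rw [r3, r3, hTs, SP_succ h10 h1, SP_succ h20 h2, zpow_sub₀ (by norm_num) (-j) 1]
    ring
  refine ⟨hal, fun j => ?_⟩
  rw [Lambda_eq h10 h1, Lambda_eq h20 h2, Lambda_eq h30 hs3]
  set D : ℤ → ℝ := fun j => QL k₃ j - QL k₁ j * QL k₂ j with hD
  have hstep : ∀ j, D (j + 1) = D j := by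
    intro j
    have := hal (j+1)
    rw [Lambda_eq h10 h1, Lambda_eq h20 h2, alpha_eq h10 h1, alpha_eq h20 h2,
      alpha_eq h30 hs3, add_sub_cancel_right] at this
    simp only [hD]
    linarith
  have hconst : ∀ M : ℕ, D (j + M) = D j := by
    intro M
    induction M with
    | zero => simp
    | succ M ih => rw [← ih, ← hstep (j + M)]; push_cast; ring_nf
  have hlim : Tendsto (fun M : ℕ => D (j + M)) atTop (nhds 0) := by
    have ht : Tendsto (fun M : ℕ => j + (M:ℤ)) atTop atTop :=
      tendsto_atTop_add_const_left _ _ tendsto_natCast_atTop_atTop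
    have := ((QL_tendsto h30 hs3).sub ((QL_tendsto h10 h1).mul (QL_tendsto h20 h2))).comp ht
    simpa [Function.comp_def] using this
  simp_rw [hconst] at hlim
  have := tendsto_nhds_unique hlim tendsto_const_nhds
  have : D j = 0 := this.symm
  simp only [hD] at this
  linarith

lemma levD_zero (n : ℤ) : LevD n 0 ((2:ℝ)^(n-1)) := by
  constructor
  · unfold SameD
    rw [← zpow_add₀ (by norm_num), show n - 1 + -n = -1 by ring]
    norm_num
  · unfold SameD
    rw [← zpow_add₀ (by norm_num), show n - 1 + -(n-1) = 0 by ring]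
    norm_num

lemma level_sum {K : ℝ → ℝ → ℝ} {k : ℤ → ℝ}
    (hK0 : ∀ x y : ℝ, 0 ≤ x → 0 ≤ y → 0 ≤ K x y)
    (hk : ∀ (n : ℤ) (x y : ℝ), 0 ≤ x → 0 ≤ y → LevD n x y → K x y = k n) {x : ℝ} (hx : 0 ≤ x) :
    ∫ y in Set.Ici (0:ℝ), K x y = (∑' n, ENNReal.ofReal (k n) * wD n).toReal := by
  rw [integral_eq_lintegral_of_nonneg_ae]
  · congr 1
    exact radial_lint hx _ _ fun m z hz h => by rw [hk m x z hx hz h]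
  · filter_upwards [ae_restrict_mem measurableSet_Ici] with y hy
    exact hK0 x y hx hy
  · exact (radial_aem hx _ k fun m z hz h => hk m x z hx hz h).aestronglyMeasurable

lemma LevD.congr_of_lt {n : ℤ} {x y z : ℝ} (h : LevD n x y) (h' : SameD (n-1) x z) :
    LevD n z y :=
  ⟨h'.succ.symm.trans h.1, fun hc => h.2 (h'.trans hc)⟩

lemma LevD.congr_of_gt {m n : ℤ} {x y z : ℝ} (h : LevD n x y) (h' : LevD m x z) (hnm : n < m) :
    LevD m z y :=
  ⟨h'.1.symm.trans (h.1.mono hnm.le), fun hc => h'.2 ((h.1.mono (by omega)).trans hc.symm)⟩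

lemma lint_prod {K₁ K₂ : ℝ → ℝ → ℝ} {k₁ k₂ : ℤ → ℝ}
    (hk₁ : ∀ (n : ℤ) (x y : ℝ), 0 ≤ x → 0 ≤ y → LevD n x y → K₁ x y = k₁ n)
    (hk₂ : ∀ (n : ℤ) (x y : ℝ), 0 ≤ x → 0 ≤ y → LevD n x y → K₂ x y = k₂ n)
    (h10 : ∀ n, 0 ≤ k₁ n) {n : ℤ} {x y : ℝ} (hx : 0 ≤ x) (hy : 0 ≤ y) (h : LevD n x y) :
    ∫⁻ z in Set.Ici (0:ℝ), ENNReal.ofReal (K₁ x z * K₂ z y) =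
      conv3 (fun m => ENNReal.ofReal (k₁ m)) (fun m => ENNReal.ofReal (k₂ m)) n := by
  classical
  set F : ℝ → ℝ≥0∞ := fun z => ENNReal.ofReal (K₁ x z * K₂ z y) with hF
  set F1 : ℝ → ℝ≥0∞ := fun z => if SameD (n-1) x z then F z else 0
  set F2 : ℝ → ℝ≥0∞ := fun z => if SameD (n-1) y z then F z else 0
  set F3 : ℝ → ℝ≥0∞ := fun z => if SameD n x z then 0 else F z
  have hsplit : F = fun z => F1 z + F2 z + F3 z := by
    ext z
    simp only [F1, F2, F3]
    by_cases a : SameD n x z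
    · rcases h.1.three a h.2 with b | b
      · have c : ¬ SameD (n-1) y z := fun c => h.2 (b.trans c.symm)
        simp [a, b, c]
      · have c : ¬ SameD (n-1) x z := fun c => h.2 (c.trans b.symm)
        simp [a, b, c]
    · have b : ¬ SameD (n-1) x z := fun b => a b.succ
      have c : ¬ SameD (n-1) y z := fun c => a (h.1.trans c.succ)
      simp [a, b, c]
  have r1 : ∀ m z, 0 ≤ z → LevD m x z →
      F1 z = if m < n then ENNReal.ofReal (k₁ m) * ENNReal.ofReal (k₂ n) else 0 := by
    intro m z hz hm
    have e : SameD (n-1) x z ↔ m < n := hm.same_iff.trans (by omega)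
    simp only [F1, hF, e]
    split_ifs with hc
    · rw [hk₁ m x z hx hz hm, hk₂ n z y hz hy (h.congr_of_lt (e.2 hc)),
        ENNReal.ofReal_mul (h10 m)]
    · rfl
  have r2 : ∀ m z, 0 ≤ z → LevD m y z →
      F2 z = if m < n then ENNReal.ofReal (k₁ n) * ENNReal.ofReal (k₂ m) else 0 := by
    intro m z hz hm
    have e : SameD (n-1) y z ↔ m < n := hm.same_iff.trans (by omega)
    simp only [F2, hF, e]
    split_ifs with hc
    · rw [hk₂ m z y hz hy hm.symm,
        hk₁ n x z hx hz (h.symm.congr_of_lt (e.2 hc)).symm,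
        ENNReal.ofReal_mul (h10 n)]
    · rfl
  have r3 : ∀ m z, 0 ≤ z → LevD m x z →
      F3 z = if n < m then ENNReal.ofReal (k₁ m) * ENNReal.ofReal (k₂ m) else 0 := by
    intro m z hz hm
    have e : SameD n x z ↔ ¬ n < m := hm.same_iff.trans (by omega)
    simp only [F3, hF, e]
    by_cases hc : n < m
    · simp only [hc, not_true_eq_false, if_false, if_true]
      rw [hk₁ m x z hx hz hm, hk₂ m z y hz hy (h.congr_of_gt hm hc), ENNReal.ofReal_mul (h10 m)]
    · simp [hc]
  have m1 := radial_aem hx F1 _ r1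
  have m2 := radial_aem hy F2 _ r2
  have m12 : AEMeasurable (fun z => F1 z + F2 z) (volume.restrict (Set.Ici (0:ℝ))) := m1.add m2
  rw [hsplit, lintegral_add_left' m12, lintegral_add_left' m1,
    radial_lint hx F1 _ r1, radial_lint hy F2 _ r2, radial_lint hx F3 _ r3, conv3]

/-- Lemma 9 (a), (c): the convolution `K₃(x,y) = ∫ K₁(x,z) K₂(z,y) dz` of two kernels in `𝒦`
is well defined, belongs to `𝒦`, and its associated sequences satisfy
`α³_j = α¹_j Λ²_j + α²_j Λ¹_j + α¹_j α²_j` and `Λ³_j = Λ¹_j Λ²_j`. -/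
theorem kernel_convolution (K₁ K₂ K₃ : ℝ → ℝ → ℝ) (k₁ k₂ : ℤ → ℝ)
    (hK₁0 : ∀ x y : ℝ, 0 ≤ x → 0 ≤ y → 0 ≤ K₁ x y)
    (hK₁dist : ∀ x y x' y' : ℝ, 0 ≤ x → 0 ≤ y → 0 ≤ x' → 0 ≤ y' →
      dyadicDist x y = dyadicDist x' y' → K₁ x y = K₁ x' y')
    (x₁ : ℝ) (hx₁ : 0 ≤ x₁) (hK₁norm : (∫ y in Set.Ici (0:ℝ), K₁ x₁ y) = 1)
    (hk₁ : ∀ (j : ℤ) (x y : ℝ), 0 ≤ x → 0 ≤ y → dyadicDist x y = (2:ℝ) ^ j → K₁ x y = k₁ j)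
    (hK₂0 : ∀ x y : ℝ, 0 ≤ x → 0 ≤ y → 0 ≤ K₂ x y)
    (hK₂dist : ∀ x y x' y' : ℝ, 0 ≤ x → 0 ≤ y → 0 ≤ x' → 0 ≤ y' →
      dyadicDist x y = dyadicDist x' y' → K₂ x y = K₂ x' y')
    (x₂ : ℝ) (hx₂ : 0 ≤ x₂) (hK₂norm : (∫ y in Set.Ici (0:ℝ), K₂ x₂ y) = 1)
    (hk₂ : ∀ (j : ℤ) (x y : ℝ), 0 ≤ x → 0 ≤ y → dyadicDist x y = (2:ℝ) ^ j → K₂ x y = k₂ j)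
    (hK₃ : ∀ x y : ℝ, K₃ x y = ∫ z in Set.Ici (0:ℝ), K₁ x z * K₂ z y) :
    (∀ x y : ℝ, 0 ≤ x → 0 ≤ y → x ≠ y →
      MeasureTheory.IntegrableOn (fun z => K₁ x z * K₂ z y) (Set.Ici (0:ℝ))) ∧
    (∀ x y : ℝ, 0 ≤ x → 0 ≤ y → 0 ≤ K₃ x y) ∧
    (∀ x y x' y' : ℝ, 0 ≤ x → 0 ≤ y → 0 ≤ x' → 0 ≤ y' →
      dyadicDist x y = dyadicDist x' y' → K₃ x y = K₃ x' y') ∧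
    (∀ x : ℝ, 0 ≤ x → (∫ y in Set.Ici (0:ℝ), K₃ x y) = 1) ∧
    (∃ k₃ : ℤ → ℝ,
      (∀ (j : ℤ) (x y : ℝ), 0 ≤ x → 0 ≤ y → dyadicDist x y = (2:ℝ) ^ j → K₃ x y = k₃ j) ∧
      (∀ j : ℤ, alphaOf k₃ j =
        alphaOf k₁ j * LambdaOf k₂ j + alphaOf k₂ j * LambdaOf k₁ j +
          alphaOf k₁ j * alphaOf k₂ j) ∧
      (∀ j : ℤ, LambdaOf k₃ j = LambdaOf k₁ j * LambdaOf k₂ j)) := by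
  have hl₁ : ∀ (n : ℤ) (x y : ℝ), 0 ≤ x → 0 ≤ y → LevD n x y → K₁ x y = k₁ n :=
    fun n x y hx hy h => hk₁ n x y hx hy (h.dist hx)
  have hl₂ : ∀ (n : ℤ) (x y : ℝ), 0 ≤ x → 0 ≤ y → LevD n x y → K₂ x y = k₂ n :=
    fun n x y hx hy h => hk₂ n x y hx hy (h.dist hx)
  have h10 : ∀ n, 0 ≤ k₁ n := fun n => by
    rw [← hl₁ n 0 _ le_rfl (by positivity) (levD_zero n)]
    exact hK₁0 _ _ le_rfl (by positivity)
  have h20 : ∀ n, 0 ≤ k₂ n := fun n => by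
    rw [← hl₂ n 0 _ le_rfl (by positivity) (levD_zero n)]
    exact hK₂0 _ _ le_rfl (by positivity)
  have h1 : ∑' n, ENNReal.ofReal (k₁ n) * wD n = 1 := by
    rw [level_sum hK₁0 hl₁ hx₁, ENNReal.toReal_eq_one_iff] at hK₁norm
    exact hK₁norm
  have h2 : ∑' n, ENNReal.ofReal (k₂ n) * wD n = 1 := by
    rw [level_sum hK₂0 hl₂ hx₂, ENNReal.toReal_eq_one_iff] at hK₂norm
    exact hK₂norm
  set C := conv3 (fun m => ENNReal.ofReal (k₁ m)) (fun m => ENNReal.ofReal (k₂ m)) with hC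
  have hCs : ∑' n, C n * wD n = 1 := by rw [hC, conv3_sum, h1, h2, one_mul]
  have hCfin : ∀ n, C n ≠ ⊤ := by
    intro n hn
    have := ENNReal.le_tsum (f := fun n => C n * wD n) n
    rw [hCs] at this
    simp only [hn, ENNReal.top_mul (wD_ne_zero n)] at this
    simp at this
  have hm : ∀ x y : ℝ, 0 ≤ x → 0 ≤ y →
      AEStronglyMeasurable (fun z => K₁ x z * K₂ z y) (volume.restrict (Set.Ici (0:ℝ))) :=
    fun x y hx hy => ((radial_aem hx _ k₁ fun m z hz h => hl₁ m x z hx hz h).mul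
      (radial_aem hy (fun z => K₂ z y) k₂
        fun m z hz h => hl₂ m z y hz hy h.symm)).aestronglyMeasurable
  have hnn : ∀ x y : ℝ, 0 ≤ x → 0 ≤ y →
      0 ≤ᵐ[volume.restrict (Set.Ici (0:ℝ))] (fun z => K₁ x z * K₂ z y) := by
    intro x y hx hy
    filter_upwards [ae_restrict_mem measurableSet_Ici] with z hz
    exact mul_nonneg (hK₁0 x z hx hz) (hK₂0 z y hz hy)
  have hK₃' : ∀ x y : ℝ, 0 ≤ x → 0 ≤ y →
      K₃ x y = (∫⁻ z in Set.Ici (0:ℝ), ENNReal.ofReal (K₁ x z * K₂ z y)).toReal := by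
    intro x y hx hy
    rw [hK₃, integral_eq_lintegral_of_nonneg_ae (hnn x y hx hy) (hm x y hx hy)]
  have hl₃ : ∀ (n : ℤ) (x y : ℝ), 0 ≤ x → 0 ≤ y → LevD n x y → K₃ x y = (C n).toReal := by
    intro n x y hx hy h
    rw [hK₃' x y hx hy, lint_prod hl₁ hl₂ h10 hx hy h]
  have hK₃0 : ∀ x y : ℝ, 0 ≤ x → 0 ≤ y → 0 ≤ K₃ x y := by
    intro x y hx hy
    rw [hK₃' x y hx hy]
    exact ENNReal.toReal_nonneg
  have hdiag : ∀ x : ℝ, 0 ≤ x → K₃ x x =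
      (∑' m, ENNReal.ofReal (k₁ m * k₂ m) * wD m).toReal := by
    intro x hx
    rw [hK₃' x x hx hx]
    congr 1
    exact radial_lint hx _ _ fun m z hz h => by
      rw [hl₁ m x z hx hz h, hl₂ m z x hz hx h.symm]
  refine ⟨?_, hK₃0, ?_, ?_, fun n => (C n).toReal, ?_, ?_⟩
  · intro x y hx hy hxy
    obtain ⟨n, hn⟩ := exists_levD hx hy hxy
    refine ⟨hm x y hx hy, ?_⟩
    rw [hasFiniteIntegral_iff_ofReal (hnn x y hx hy), lint_prod hl₁ hl₂ h10 hx hy hn]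
    exact (hCfin n).lt_top
  · intro x y x' y' hx hy hx' hy' hd
    by_cases hxy : x = y
    · subst hxy
      by_cases hxy' : x' = y'
      · subst hxy'
        rw [hdiag x hx, hdiag x' hx']
      · obtain ⟨n, hn⟩ := exists_levD hx' hy' hxy'
        rw [hn.dist hx'] at hd
        exact absurd rfl (levD_of_dist hx hy hd).ne
    · obtain ⟨n, hn⟩ := exists_levD hx hy hxy
      rw [hn.dist hx] at hd
      rw [hl₃ n x y hx hy hn, hl₃ n x' y' hx' hy' (levD_of_dist hx' hy' hd.symm)]
  · intro x hx
    rw [level_sum hK₃0 hl₃ hx]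
    simp_rw [ENNReal.ofReal_toReal (hCfin _)]
    rw [hCs, ENNReal.toReal_one]
  · intro n x y hx hy h
    exact hl₃ n x y hx hy (levD_of_dist hx hy h)
  · exact seq_part h10 h20 h1 h2 (fun n => ENNReal.toReal_nonneg)
      (fun n => ENNReal.ofReal_toReal (hCfin n))
end

section
/- Let K₁, K₂ ∈ 𝒦 be 1-stable with parameters σ₁ > 0 and σ₂ > 0 respectively. Then the convolution K₃(x,y) = ∫_{ℝ⁺} K₁(x,z) K₂(z,y) dz is a kernel in 𝒦 that is 1-stable with parameter σ₁ + σ₂. -/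
open MeasureTheory Set Filter
open scoped ENNReal

/-- index of the dyadic interval of length `2^j` containing `x` -/
noncomputable def dix (j : ℤ) (x : ℝ) : ℤ := ⌊x * (2:ℝ) ^ (-j)⌋

lemma dix_succ (j : ℤ) (x : ℝ) : dix (j+1) x = dix j x / 2 := by
  unfold dix
  have h : x * (2:ℝ) ^ (-(j+1)) = x * (2:ℝ) ^ (-j) / ((2:ℕ):ℝ) := by
    rw [neg_add, zpow_add₀ (by norm_num)]
    norm_num
    ring
  rw [h, Int.floor_div_natCast]
  rfl

lemma dix_pred (j : ℤ) (x : ℝ) : dix j x = dix (j-1) x / 2 := by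
  have := dix_succ (j-1) x
  simpa using this

lemma dix_eq_iff (j n : ℤ) (x : ℝ) :
    dix j x = n ↔ x ∈ Set.Ico ((n:ℝ) * (2:ℝ)^j) (((n:ℝ)+1) * (2:ℝ)^j) := by
  unfold dix
  have h2 : (0:ℝ) < (2:ℝ)^j := by positivity
  rw [Int.floor_eq_iff, zpow_neg, ← div_eq_mul_inv, le_div_iff₀ h2, div_lt_iff₀ h2]
  rfl

lemma dix_mono {x y : ℝ} {i j : ℤ} (hij : i ≤ j) (h : dix i x = dix i y) :
    dix j x = dix j y := by
  induction j, hij using Int.leInduction with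
  | base => exact h
  | succ n _ ih => rw [dix_succ, dix_succ, ih]

lemma dix_nonneg {x : ℝ} (hx : 0 ≤ x) (j : ℤ) : 0 ≤ dix j x := by
  unfold dix
  positivity

lemma exists_dix_eq {x y : ℝ} (hx : 0 ≤ x) (hy : 0 ≤ y) : ∃ j : ℤ, dix j x = dix j y := by
  obtain ⟨n, hn⟩ := pow_unbounded_of_one_lt (max x y) (one_lt_two : (1:ℝ) < 2)
  refine ⟨n, ?_⟩
  have h1 : dix n x = 0 := by
    rw [dix_eq_iff]
    simp
    exact ⟨hx, (le_max_left _ _).trans_lt hn⟩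
  have h2 : dix n y = 0 := by
    rw [dix_eq_iff]
    simp
    exact ⟨hy, (le_max_right _ _).trans_lt hn⟩
  rw [h1, h2]

lemma abs_lt_of_dix_eq {x y : ℝ} {j : ℤ} (h : dix j x = dix j y) : |x - y| < (2:ℝ)^j := by
  have h1 := (dix_eq_iff j _ x).1 rfl
  have h2 := (dix_eq_iff j _ y).1 h.symm
  rw [abs_lt]
  constructor <;> linarith [h1.1, h1.2, h2.1, h2.2]

lemma exists_least_dix {x y : ℝ} (hx : 0 ≤ x) (hy : 0 ≤ y) (hxy : x ≠ y) :
    ∃ m : ℤ, ∀ j, dix j x = dix j y ↔ m ≤ j := by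
  have hpos : 0 < |x - y| := abs_pos.2 (sub_ne_zero.2 hxy)
  obtain ⟨n, hn⟩ := exists_pow_lt_of_lt_one hpos (by norm_num : (1/2:ℝ) < 1)
  have hb : ∀ z : ℤ, dix z x = dix z y → -(n:ℤ) ≤ z := by
    intro z hz
    by_contra hlt
    push Not at hlt
    have h1 := abs_lt_of_dix_eq (dix_mono hlt.le hz)
    rw [zpow_neg, zpow_natCast] at h1
    rw [one_div, inv_pow] at hn
    linarith
  obtain ⟨m, hm, hm'⟩ := Int.exists_least_of_bdd ⟨_, hb⟩ (exists_dix_eq hx hy)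
  exact ⟨m, fun j => ⟨hm' j, fun h => dix_mono h hm⟩⟩

open Classical in
/-- the level: `dyadicDist x y = 2 ^ lev x y` -/
noncomputable def lev (x y : ℝ) : ℤ :=
  if h : 0 ≤ x ∧ 0 ≤ y ∧ x ≠ y then (exists_least_dix h.1 h.2.1 h.2.2).choose else 0

lemma lev_le {x y : ℝ} (hx : 0 ≤ x) (hy : 0 ≤ y) (hxy : x ≠ y) (j : ℤ) :
    dix j x = dix j y ↔ lev x y ≤ j := by
  unfold lev
  rw [dif_pos ⟨hx, hy, hxy⟩]
  exact (exists_least_dix hx hy hxy).choose_spec j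

lemma lev_eq {x y : ℝ} (hx : 0 ≤ x) (hy : 0 ≤ y) (hxy : x ≠ y) (m : ℤ) :
    lev x y = m ↔ dix m x = dix m y ∧ dix (m-1) x ≠ dix (m-1) y := by
  rw [ne_eq, lev_le hx hy hxy, lev_le hx hy hxy]
  omega

lemma lev_comm {x y : ℝ} (hx : 0 ≤ x) (hy : 0 ≤ y) (hxy : x ≠ y) : lev x y = lev y x := by
  rw [lev_eq hx hy hxy]
  have := (lev_eq hy hx hxy.symm _).1 rfl
  exact ⟨this.1.symm, this.2.symm⟩

lemma dyadicDist_eq {x y : ℝ} (hx : 0 ≤ x) (hy : 0 ≤ y) (hxy : x ≠ y) :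
    dyadicDist x y = (2:ℝ) ^ lev x y := by
  unfold dyadicDist
  rw [if_neg hxy]
  apply IsLeast.csInf_eq
  constructor
  · have h := (lev_le hx hy hxy _).2 le_rfl
    refine ⟨-lev x y, (dix (lev x y) x).toNat, by simp, ?_, ?_⟩
    · have h1 := (dix_eq_iff (lev x y) _ x).1 rfl
      have h2 : (((dix (lev x y) x).toNat : ℕ) : ℝ) = ((dix (lev x y) x : ℤ) : ℝ) := by
        exact_mod_cast Int.toNat_of_nonneg (dix_nonneg hx _)
      rw [h2, neg_neg]
      exact h1
    · have h1 := (dix_eq_iff (lev x y) _ y).1 h.symm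
      have h2 : (((dix (lev x y) x).toNat : ℕ) : ℝ) = ((dix (lev x y) x : ℤ) : ℝ) := by
        exact_mod_cast Int.toNat_of_nonneg (dix_nonneg hx _)
      rw [h2, neg_neg]
      exact h1
  · rintro r ⟨j, k, rfl, h1, h2⟩
    have e1 := (dix_eq_iff (-j) k x).2 (by simpa using h1)
    have e2 := (dix_eq_iff (-j) k y).2 (by simpa using h2)
    exact zpow_le_zpow_right₀ one_le_two ((lev_le hx hy hxy _).1 (e1.trans e2.symm))

lemma lev_zero_pow (m : ℤ) : lev 0 ((2:ℝ)^(m-1)) = m := by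
  have hp : (0:ℝ) < (2:ℝ)^(m-1) := by positivity
  rw [lev_eq le_rfl hp.le hp.ne]
  have z : ∀ j, dix j 0 = 0 := by intro j; simp [dix]
  rw [z, z]
  constructor
  · symm
    rw [dix_eq_iff]
    simp
    positivity
  · have : dix (m-1) ((2:ℝ)^(m-1)) = 1 := by
      rw [dix_eq_iff]
      simp
      linarith
    rw [this]
    norm_num

lemma lev_cases {x y z : ℝ} (hx : 0 ≤ x) (hy : 0 ≤ y) (hz : 0 ≤ z) (hxy : x ≠ y)
    (hzx : x ≠ z) (hzy : y ≠ z) :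
    (lev x z < lev x y ∧ lev y z = lev x y) ∨ (lev y z < lev x y ∧ lev x z = lev x y) ∨
    (lev x y < lev x z ∧ lev y z = lev x z) := by
  obtain ⟨a1, a2⟩ := (lev_eq hx hy hxy _).1 rfl
  generalize lev x y = m at *
  by_cases h1 : lev x z < m
  · left
    refine ⟨h1, (lev_eq hy hz hzy _).2 ?_⟩
    have b1 := (lev_le hx hz hzx (m-1)).2 (by omega)
    have b2 := (lev_le hx hz hzx m).2 (by omega)
    exact ⟨a1.symm.trans b2, fun h => a2 (b1.trans h.symm)⟩
  by_cases h2 : lev y z < m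
  · right; left
    refine ⟨h2, (lev_eq hx hz hzx _).2 ?_⟩
    have b1 := (lev_le hy hz hzy (m-1)).2 (by omega)
    have b2 := (lev_le hy hz hzy m).2 (by omega)
    exact ⟨a1.trans b2, fun h => a2 (h.trans b1.symm)⟩
  right; right
  have c1 : dix (m-1) x ≠ dix (m-1) z := fun h => h1 (by
    have := (lev_le hx hz hzx (m-1)).1 h
    omega)
  have c2 : dix (m-1) y ≠ dix (m-1) z := fun h => h2 (by
    have := (lev_le hy hz hzy (m-1)).1 h
    omega)
  have c3 : dix m x ≠ dix m z := by
    intro h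
    rw [dix_pred m x, dix_pred m y] at a1
    rw [dix_pred m x, dix_pred m z] at h
    omega
  have c4 : dix m y ≠ dix m z := a1 ▸ c3
  have d1 : m < lev x z := by
    by_contra h
    exact c3 ((lev_le hx hz hzx m).2 (by omega))
  have d2 : m < lev y z := by
    by_contra h
    exact c4 ((lev_le hy hz hzy m).2 (by omega))
  refine ⟨d1, le_antisymm ?_ ?_⟩
  · rw [← lev_le hy hz hzy, ← dix_mono d1.le a1]
    exact (lev_le hx hz hzx _).2 le_rfl
  · rw [← lev_le hx hz hzx, dix_mono d2.le a1]
    exact (lev_le hy hz hzy _).2 le_rfl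

lemma measurable_dix (j : ℤ) : Measurable (dix j) := by
  unfold dix
  fun_prop

lemma measurable_lev : Measurable (fun p : ℝ × ℝ => lev p.1 p.2) := by
  apply measurable_to_countable'
  intro m
  have hG : MeasurableSet {p : ℝ × ℝ | 0 ≤ p.1 ∧ 0 ≤ p.2 ∧ p.1 ≠ p.2} := by
    refine (measurableSet_le measurable_const measurable_fst).inter
      ((measurableSet_le measurable_const measurable_snd).inter ?_)
    exact (measurableSet_eq_fun measurable_fst measurable_snd).compl
  have hB : ∀ j, MeasurableSet {p : ℝ × ℝ | dix j p.1 = dix j p.2} := fun j =>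
    measurableSet_eq_fun ((measurable_dix j).comp measurable_fst)
      ((measurable_dix j).comp measurable_snd)
  have : (fun p : ℝ × ℝ => lev p.1 p.2) ⁻¹' {m} =
      ({p : ℝ × ℝ | 0 ≤ p.1 ∧ 0 ≤ p.2 ∧ p.1 ≠ p.2} ∩
        ({p : ℝ × ℝ | dix m p.1 = dix m p.2} ∩ {p : ℝ × ℝ | dix (m-1) p.1 = dix (m-1) p.2}ᶜ)) ∪
      ({p : ℝ × ℝ | 0 ≤ p.1 ∧ 0 ≤ p.2 ∧ p.1 ≠ p.2}ᶜ ∩ {p : ℝ × ℝ | (0:ℤ) = m}) := by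
    ext p
    by_cases h : 0 ≤ p.1 ∧ 0 ≤ p.2 ∧ p.1 ≠ p.2
    · have h' := lev_eq h.1 h.2.1 h.2.2 m
      constructor
      · intro hm
        exact Or.inl ⟨h, h'.1 hm⟩
      · rintro (hm | hm)
        · exact h'.2 hm.2
        · exact absurd h hm.1
    · have h' : (lev p.1 p.2 = m ↔ (0:ℤ) = m) := by
        unfold lev
        rw [dif_neg h]
      constructor
      · intro hm
        exact Or.inr ⟨h, h'.1 hm⟩
      · rintro (hm | hm)
        · exact absurd hm.1 h
        · exact h'.2 hm.2
  rw [this]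
  exact (hG.inter ((hB m).inter (hB (m-1)).compl)).union (hG.compl.inter (MeasurableSet.const _))

lemma measurable_lev_right (x : ℝ) : Measurable (lev x) :=
  measurable_lev.comp (measurable_const.prodMk measurable_id)

lemma volume_dix (j n : ℤ) : volume {z : ℝ | dix j z = n} = ENNReal.ofReal ((2:ℝ)^j) := by
  have : {z : ℝ | dix j z = n} = Set.Ico ((n:ℝ) * (2:ℝ)^j) (((n:ℝ)+1) * (2:ℝ)^j) := by
    ext z
    exact dix_eq_iff j n z
  rw [this, Real.volume_Ico]
  congr 1
  ring

lemma ae_ne (x : ℝ) : ∀ᵐ z ∂(volume.restrict (Set.Ici (0:ℝ))), x ≠ z := by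
  have : ∀ᵐ z ∂(volume.restrict (Set.Ici (0:ℝ))), z ∉ ({x} : Set ℝ) :=
    measure_eq_zero_iff_ae_notMem.1 (by simp)
  filter_upwards [this] with z hz h
  exact hz h.symm

lemma ae_nonneg' : ∀ᵐ z ∂(volume.restrict (Set.Ici (0:ℝ))), 0 ≤ z :=
  ae_restrict_mem measurableSet_Ici

lemma map_lev_singleton {x : ℝ} (hx : 0 ≤ x) (m : ℤ) :
    (volume.restrict (Set.Ici (0:ℝ))).map (lev x) {m} = ENNReal.ofReal ((2:ℝ)^(m-1)) := by
  rw [Measure.map_apply (measurable_lev_right x) (measurableSet_singleton m)]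
  have h1 : (lev x ⁻¹' {m} : Set ℝ) =ᵐ[volume.restrict (Set.Ici (0:ℝ))]
      ({z | dix m z = dix m x} \ {z | dix (m-1) z = dix (m-1) x} : Set ℝ) := by
    filter_upwards [ae_ne x, ae_nonneg'] with z hz hz0
    have := lev_eq hx hz0 hz m
    apply propext
    change lev x z = m ↔ (dix m z = dix m x ∧ ¬ dix (m-1) z = dix (m-1) x)
    rw [this, eq_comm, ne_eq, eq_comm (a := dix (m-1) x)]
  rw [measure_congr h1]
  have hsub : ({z | dix m z = dix m x} : Set ℝ) ⊆ Set.Ici 0 := by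
    intro z hz
    have h := ((dix_eq_iff m _ z).1 hz).1
    have h0 : (0:ℝ) ≤ (dix m x : ℝ) := by exact_mod_cast dix_nonneg hx m
    have : (0:ℝ) ≤ (dix m x : ℝ) * 2^m := by positivity
    exact this.trans h
  have hms : ∀ j n, MeasurableSet {z : ℝ | dix j z = n} := fun j n =>
    measurable_dix j (measurableSet_singleton n)
  rw [Measure.restrict_apply ((hms _ _).diff (hms _ _)),
    inter_eq_left.2 (sdiff_subset.trans hsub), measure_sdiff _ (hms _ _).nullMeasurableSet,
    volume_dix, volume_dix, ← ENNReal.ofReal_sub _ (by positivity)]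
  · congr 1
    rw [zpow_sub₀ (by norm_num)]
    ring
  · rw [volume_dix]; simp
  · intro z hz
    exact dix_mono (by omega) hz

/-- common law of the levels -/
noncomputable def levMeasure : Measure ℤ := (volume.restrict (Set.Ici (0:ℝ))).map (lev 0)

lemma map_lev {x : ℝ} (hx : 0 ≤ x) :
    (volume.restrict (Set.Ici (0:ℝ))).map (lev x) = levMeasure := by
  apply Measure.ext_of_singleton
  intro m
  rw [levMeasure, map_lev_singleton hx, map_lev_singleton le_rfl]

lemma levMeasure_singleton (m : ℤ) : levMeasure {m} = ENNReal.ofReal ((2:ℝ)^(m-1)) :=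
  map_lev_singleton le_rfl m

lemma integral_lev {x : ℝ} (hx : 0 ≤ x) (f : ℤ → ℝ) :
    ∫ z in Set.Ici (0:ℝ), f (lev x z) = ∫ j, f j ∂levMeasure := by
  rw [← map_lev hx, integral_map (measurable_lev_right x).aemeasurable
    (measurable_of_countable f).aestronglyMeasurable]

lemma integrable_lev {x : ℝ} (hx : 0 ≤ x) (f : ℤ → ℝ) :
    Integrable (fun z => f (lev x z)) (volume.restrict (Set.Ici (0:ℝ))) ↔
      Integrable f levMeasure := by
  rw [← map_lev hx, integrable_map_measure (measurable_of_countable f).aestronglyMeasurable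
    (measurable_lev_right x).aemeasurable]
  rfl

lemma kernel_eq {K : ℝ → ℝ → ℝ}
    (hd : ∀ x y x' y' : ℝ, 0 ≤ x → 0 ≤ y → 0 ≤ x' → 0 ≤ y' →
      dyadicDist x y = dyadicDist x' y' → K x y = K x' y')
    {x y : ℝ} (hx : 0 ≤ x) (hy : 0 ≤ y) (hxy : x ≠ y) :
    K x y = K 0 ((2:ℝ)^(lev x y - 1)) := by
  have hp : (0:ℝ) < (2:ℝ)^(lev x y - 1) := by positivity
  apply hd _ _ _ _ hx hy le_rfl hp.le
  rw [dyadicDist_eq hx hy hxy, dyadicDist_eq le_rfl hp.le hp.ne, lev_zero_pow]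

lemma integral_kernel_eq {K : ℝ → ℝ → ℝ}
    (hd : ∀ x y x' y' : ℝ, 0 ≤ x → 0 ≤ y → 0 ≤ x' → 0 ≤ y' →
      dyadicDist x y = dyadicDist x' y' → K x y = K x' y')
    {x : ℝ} (hx : 0 ≤ x) :
    ∫ y in Set.Ici (0:ℝ), K x y = ∫ j, K 0 ((2:ℝ)^(j - 1)) ∂levMeasure := by
  rw [← integral_lev hx]
  apply integral_congr_ae
  filter_upwards [ae_ne x, ae_nonneg'] with z hz hz0
  exact kernel_eq hd hx hz0 hz

lemma kernel_tendsto {K : ℝ → ℝ → ℝ} {σ : ℝ}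
    (hs : ∀ ε : ℝ, 0 < ε → ∃ R : ℝ, ∀ x y : ℝ, 0 ≤ x → 0 ≤ y →
      R ≤ dyadicDist x y → |dyadicDist x y ^ 2 * K x y - σ| < ε) :
    Tendsto (fun m : ℤ => ((2:ℝ)^m)^2 * K 0 ((2:ℝ)^(m - 1))) atTop (nhds σ) := by
  rw [Metric.tendsto_atTop]
  intro ε hε
  obtain ⟨R, hR⟩ := hs ε hε
  obtain ⟨n, hn⟩ := pow_unbounded_of_one_lt R (one_lt_two : (1:ℝ) < 2)
  refine ⟨n, fun m hm => ?_⟩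
  have hp : (0:ℝ) < (2:ℝ)^(m - 1) := by positivity
  have hd : dyadicDist 0 ((2:ℝ)^(m - 1)) = (2:ℝ)^m := by
    rw [dyadicDist_eq le_rfl hp.le hp.ne, lev_zero_pow]
  have := hR 0 _ le_rfl hp.le (by
    rw [hd]
    refine hn.le.trans ?_
    rw [← zpow_natCast]
    exact zpow_le_zpow_right₀ one_le_two hm)
  rw [hd] at this
  exact this

lemma bound_of_integrable {k : ℤ → ℝ} (h0 : ∀ j, 0 ≤ k j) (hi : Integrable k levMeasure)
    (m j : ℤ) (hj : m < j) : k j ≤ (∫ j, k j ∂levMeasure) / (2:ℝ)^m := by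
  rw [le_div_iff₀ (by positivity)]
  have h1 : ∫ i in {j}, k i ∂levMeasure ≤ ∫ i, k i ∂levMeasure :=
    setIntegral_le_integral hi (Eventually.of_forall h0)
  rw [integral_singleton, measureReal_def, levMeasure_singleton,
    ENNReal.toReal_ofReal (by positivity), smul_eq_mul] at h1
  have h2 : (2:ℝ)^m ≤ (2:ℝ)^(j-1) := zpow_le_zpow_right₀ one_le_two (by omega)
  nlinarith [mul_le_mul_of_nonneg_left h2 (h0 j)]

lemma integrableOn_prod {k₁ k₂ : ℤ → ℝ} (h2 : ∀ j, 0 ≤ k₂ j)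
    (i1 : Integrable k₁ levMeasure) (i2 : Integrable k₂ levMeasure) (m : ℤ) :
    IntegrableOn (fun j => k₁ j * k₂ j) (Set.Ioi m) levMeasure := by
  refine Integrable.mul_bdd (c := (∫ j, k₂ j ∂levMeasure) / (2:ℝ)^m) i1.integrableOn
    (measurable_of_countable k₂).aestronglyMeasurable ?_
  filter_upwards [ae_restrict_mem measurableSet_Ioi] with j hj
  rw [Real.norm_eq_abs, abs_of_nonneg (h2 j)]
  exact bound_of_integrable h2 i2 m j hj

/-- the value of the convolution at level `m` -/
noncomputable def convLev (k₁ k₂ : ℤ → ℝ) (m : ℤ) : ℝ :=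
  (∫ j in Set.Iio m, k₁ j ∂levMeasure) * k₂ m + k₁ m * (∫ j in Set.Iio m, k₂ j ∂levMeasure) +
    ∫ j in Set.Ioi m, k₁ j * k₂ j ∂levMeasure

lemma conv_formula {k₁ k₂ : ℤ → ℝ} (h2 : ∀ j, 0 ≤ k₂ j)
    (i1 : Integrable k₁ levMeasure) (i2 : Integrable k₂ levMeasure)
    {x y : ℝ} (hx : 0 ≤ x) (hy : 0 ≤ y) (hxy : x ≠ y) :
    ∫ z in Set.Ici (0:ℝ), k₁ (lev x z) * k₂ (lev y z) = convLev k₁ k₂ (lev x y) := by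
  set m := lev x y with hm
  have e : ∀ᵐ z ∂(volume.restrict (Set.Ici (0:ℝ))), k₁ (lev x z) * k₂ (lev y z) =
      ((Set.Iio m).indicator k₁ (lev x z) * k₂ m + k₁ m * (Set.Iio m).indicator k₂ (lev y z)) +
      (Set.Ioi m).indicator (fun j => k₁ j * k₂ j) (lev x z) := by
    filter_upwards [ae_ne x, ae_ne y, ae_nonneg'] with z hzx hzy hz
    simp only [indicator_apply, mem_Iio, mem_Ioi]
    rcases lev_cases hx hy hz hxy hzx hzy with ⟨a, b⟩ | ⟨a, b⟩ | ⟨a, b⟩ <;> rw [← hm] at a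
    · rw [← hm] at b
      simp [a, b, a.le]
    · rw [← hm] at b
      simp [a, b]
    · simp [a, b, not_lt.2 a.le]
  have j1 : Integrable ((Set.Iio m).indicator k₁) levMeasure := i1.indicator measurableSet_Iio
  have j2 : Integrable ((Set.Iio m).indicator k₂) levMeasure := i2.indicator measurableSet_Iio
  have j3 : Integrable ((Set.Ioi m).indicator (fun j => k₁ j * k₂ j)) levMeasure :=
    (integrable_indicator_iff measurableSet_Ioi).2 (integrableOn_prod h2 i1 i2 m)
  have l1 := ((integrable_lev hx _).2 j1).mul_const (k₂ m)
  have l2 := ((integrable_lev hy _).2 j2).const_mul (k₁ m)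
  have l3 := ((integrable_lev hx _).2 j3)
  have l12 : Integrable (fun z => (Set.Iio m).indicator k₁ (lev x z) * k₂ m +
      k₁ m * (Set.Iio m).indicator k₂ (lev y z)) (volume.restrict (Set.Ici (0:ℝ))) := l1.add l2
  rw [integral_congr_ae e, integral_add l12 l3, integral_add l1 l2,
    integral_mul_const, integral_const_mul, integral_lev hx, integral_lev hy, integral_lev hx,
    integral_indicator measurableSet_Iio, integral_indicator measurableSet_Iio,
    integral_indicator measurableSet_Ioi]
  rfl

lemma tendsto_Iio {k : ℤ → ℝ} (hi : Integrable k levMeasure) :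
    Tendsto (fun m : ℤ => ∫ j in Set.Iio m, k j ∂levMeasure) atTop
      (nhds (∫ j, k j ∂levMeasure)) := by
  have := tendsto_setIntegral_of_monotone (μ := levMeasure) (f := k) (s := fun m : ℤ => Set.Iio m)
    (fun _ => measurableSet_Iio) (fun a b h => Iio_subset_Iio h) hi.integrableOn
  have hu : (⋃ m : ℤ, Set.Iio m) = Set.univ := by
    ext j
    simp only [mem_iUnion, mem_Iio, mem_univ, iff_true]
    exact ⟨j+1, by omega⟩
  rwa [hu, setIntegral_univ] at this

lemma tendsto_Ioi {k : ℤ → ℝ} (hi : Integrable k levMeasure) :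
    Tendsto (fun m : ℤ => ∫ j in Set.Ioi m, k j ∂levMeasure) atTop (nhds 0) := by
  have := tendsto_setIntegral_of_antitone (μ := levMeasure) (f := k) (s := fun m : ℤ => Set.Ioi m)
    (fun _ => measurableSet_Ioi) (fun a b h => Ioi_subset_Ioi h) ⟨0, hi.integrableOn⟩
  have hu : (⋂ m : ℤ, Set.Ioi m) = ∅ := by
    ext j
    simp only [mem_iInter, mem_Ioi, mem_empty_iff_false, iff_false, not_forall]
    exact ⟨j, by omega⟩
  rwa [hu, setIntegral_empty] at this

lemma tendsto_conv {k₁ k₂ : ℤ → ℝ} (h1 : ∀ j, 0 ≤ k₁ j) (h2 : ∀ j, 0 ≤ k₂ j)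
    (i1 : Integrable k₁ levMeasure) (i2 : Integrable k₂ levMeasure)
    (e1 : ∫ j, k₁ j ∂levMeasure = 1) (e2 : ∫ j, k₂ j ∂levMeasure = 1) {σ₁ σ₂ : ℝ}
    (t1 : Tendsto (fun m : ℤ => ((2:ℝ)^m)^2 * k₁ m) atTop (nhds σ₁))
    (t2 : Tendsto (fun m : ℤ => ((2:ℝ)^m)^2 * k₂ m) atTop (nhds σ₂)) :
    Tendsto (fun m : ℤ => ((2:ℝ)^m)^2 * convLev k₁ k₂ m) atTop (nhds (σ₁ + σ₂)) := by
  have a1 := tendsto_Iio i1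
  have a2 := tendsto_Iio i2
  rw [e1] at a1
  rw [e2] at a2
  have a3 : Tendsto (fun m : ℤ => ((2:ℝ)^m)^2 * ∫ j in Set.Ioi m, k₁ j * k₂ j ∂levMeasure)
      atTop (nhds 0) := by
    have hb := (tendsto_Ioi i1).const_mul (σ₂ + 1)
    rw [mul_zero] at hb
    obtain ⟨M, hM⟩ := eventually_atTop.1 (t2.eventually_lt_const (lt_add_one σ₂))
    refine squeeze_zero' (Eventually.of_forall fun m => ?_) ?_ hb
    · exact mul_nonneg (by positivity) (integral_nonneg fun j => mul_nonneg (h1 j) (h2 j))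
    · filter_upwards [eventually_ge_atTop M] with m hm
      rw [← integral_const_mul, ← integral_const_mul]
      refine setIntegral_mono_on ((integrableOn_prod h2 i1 i2 m).const_mul _)
        (i1.integrableOn.const_mul _) measurableSet_Ioi fun j hj => ?_
      have hj' : m < j := hj
      have b := hM j (by omega)
      have c : ((2:ℝ)^m)^2 ≤ ((2:ℝ)^j)^2 :=
        pow_le_pow_left₀ (by positivity) (zpow_le_zpow_right₀ one_le_two hj'.le) 2
      have d : ((2:ℝ)^m)^2 * k₂ j ≤ σ₂ + 1 := (mul_le_mul_of_nonneg_right c (h2 j)).trans b.le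
      calc ((2:ℝ)^m)^2 * (k₁ j * k₂ j) = (((2:ℝ)^m)^2 * k₂ j) * k₁ j := by ring
        _ ≤ _ := mul_le_mul_of_nonneg_right d (h1 j)
  have := ((a1.mul t2).add (t1.mul a2)).add a3
  have hv : 1 * σ₂ + σ₁ * 1 + 0 = σ₁ + σ₂ := by ring
  rw [hv] at this
  refine this.congr fun m => ?_
  unfold convLev
  ring

lemma integral_conv {k₁ k₂ : ℤ → ℝ} (h2 : ∀ j, 0 ≤ k₂ j)
    (i1 : Integrable k₁ levMeasure) (i2 : Integrable k₂ levMeasure)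
    (e1 : ∫ j, k₁ j ∂levMeasure = 1) (e2 : ∫ j, k₂ j ∂levMeasure = 1) {x : ℝ} (hx : 0 ≤ x) :
    ∫ y in Set.Ici (0:ℝ), ∫ z in Set.Ici (0:ℝ), k₁ (lev x z) * k₂ (lev z y) = 1 := by
  have hm : Measurable (fun p : ℝ × ℝ => k₁ (lev x p.1) * k₂ (lev p.1 p.2)) :=
    ((measurable_of_countable k₁).comp ((measurable_lev_right x).comp measurable_fst)).mul
      ((measurable_of_countable k₂).comp measurable_lev)
  have hint : Integrable (fun p : ℝ × ℝ => k₁ (lev x p.1) * k₂ (lev p.1 p.2))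
      ((volume.restrict (Set.Ici (0:ℝ))).prod (volume.restrict (Set.Ici (0:ℝ)))) := by
    rw [integrable_prod_iff hm.aestronglyMeasurable]
    constructor
    · filter_upwards [ae_nonneg'] with z hz
      exact ((integrable_lev hz _).2 i2).const_mul _
    · refine ((integrable_lev hx _).2 i1.norm).congr ?_
      filter_upwards [ae_nonneg'] with z hz
      simp only [norm_mul]
      rw [integral_const_mul, integral_lev hz (fun j => ‖k₂ j‖)]
      simp only [Real.norm_eq_abs, abs_of_nonneg (h2 _), e2, mul_one]
  rw [integral_integral_swap (f := fun y z => k₁ (lev x z) * k₂ (lev z y)) hint.swap]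
  rw [← e1, ← integral_lev hx]
  apply integral_congr_ae
  filter_upwards [ae_nonneg'] with z hz
  change (∫ y in Set.Ici (0:ℝ), k₁ (lev x z) * k₂ (lev z y)) = _
  rw [integral_const_mul, integral_lev hz, e2, mul_one]

/-- Lemma 9 (b): the convolution of two `1`-stable kernels in `𝒦`, with parameters `σ₁` and
`σ₂`, is a kernel in `𝒦` which is `1`-stable with parameter `σ₁ + σ₂`. -/
theorem kernel_convolution_stable (K₁ K₂ K₃ : ℝ → ℝ → ℝ) (σ₁ σ₂ : ℝ)
    (hσ₁ : 0 < σ₁) (hσ₂ : 0 < σ₂)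
    (hK₁0 : ∀ x y : ℝ, 0 ≤ x → 0 ≤ y → 0 ≤ K₁ x y)
    (hK₁dist : ∀ x y x' y' : ℝ, 0 ≤ x → 0 ≤ y → 0 ≤ x' → 0 ≤ y' →
      dyadicDist x y = dyadicDist x' y' → K₁ x y = K₁ x' y')
    (x₁ : ℝ) (hx₁ : 0 ≤ x₁) (hK₁norm : (∫ y in Set.Ici (0:ℝ), K₁ x₁ y) = 1)
    (hK₂0 : ∀ x y : ℝ, 0 ≤ x → 0 ≤ y → 0 ≤ K₂ x y)
    (hK₂dist : ∀ x y x' y' : ℝ, 0 ≤ x → 0 ≤ y → 0 ≤ x' → 0 ≤ y' →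
      dyadicDist x y = dyadicDist x' y' → K₂ x y = K₂ x' y')
    (x₂ : ℝ) (hx₂ : 0 ≤ x₂) (hK₂norm : (∫ y in Set.Ici (0:ℝ), K₂ x₂ y) = 1)
    (hstab₁ : ∀ ε : ℝ, 0 < ε → ∃ R : ℝ, ∀ x y : ℝ, 0 ≤ x → 0 ≤ y →
      R ≤ dyadicDist x y → |dyadicDist x y ^ 2 * K₁ x y - σ₁| < ε)
    (hstab₂ : ∀ ε : ℝ, 0 < ε → ∃ R : ℝ, ∀ x y : ℝ, 0 ≤ x → 0 ≤ y →
      R ≤ dyadicDist x y → |dyadicDist x y ^ 2 * K₂ x y - σ₂| < ε)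
    (hK₃ : ∀ x y : ℝ, K₃ x y = ∫ z in Set.Ici (0:ℝ), K₁ x z * K₂ z y) :
    (∀ x y : ℝ, 0 ≤ x → 0 ≤ y → 0 ≤ K₃ x y) ∧
    (∀ x y x' y' : ℝ, 0 ≤ x → 0 ≤ y → 0 ≤ x' → 0 ≤ y' →
      dyadicDist x y = dyadicDist x' y' → K₃ x y = K₃ x' y') ∧
    (∀ x : ℝ, 0 ≤ x → (∫ y in Set.Ici (0:ℝ), K₃ x y) = 1) ∧
    (∀ ε : ℝ, 0 < ε → ∃ R : ℝ, ∀ x y : ℝ, 0 ≤ x → 0 ≤ y →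
      R ≤ dyadicDist x y → |dyadicDist x y ^ 2 * K₃ x y - (σ₁ + σ₂)| < ε) := by
  set k₁ : ℤ → ℝ := fun j => K₁ 0 ((2:ℝ)^(j-1)) with hk₁
  set k₂ : ℤ → ℝ := fun j => K₂ 0 ((2:ℝ)^(j-1)) with hk₂
  have h1 : ∀ j, 0 ≤ k₁ j := fun j => hK₁0 _ _ le_rfl (by positivity)
  have h2 : ∀ j, 0 ≤ k₂ j := fun j => hK₂0 _ _ le_rfl (by positivity)
  have e1 : ∫ j, k₁ j ∂levMeasure = 1 := (integral_kernel_eq hK₁dist hx₁).symm.trans hK₁norm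
  have e2 : ∫ j, k₂ j ∂levMeasure = 1 := (integral_kernel_eq hK₂dist hx₂).symm.trans hK₂norm
  have i1 : Integrable k₁ levMeasure := by
    by_contra h
    rw [integral_undef h] at e1
    norm_num at e1
  have i2 : Integrable k₂ levMeasure := by
    by_contra h
    rw [integral_undef h] at e2
    norm_num at e2
  have f0 : ∀ x y, 0 ≤ x → 0 ≤ y →
      K₃ x y = ∫ z in Set.Ici (0:ℝ), k₁ (lev x z) * k₂ (lev z y) := by
    intro x y hx hy
    rw [hK₃]
    apply integral_congr_ae
    filter_upwards [ae_ne x, ae_ne y, ae_nonneg'] with z hzx hzy hz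
    rw [kernel_eq hK₁dist hx hz hzx, kernel_eq hK₂dist hz hy hzy.symm]
  have f1 : ∀ x y, 0 ≤ x → 0 ≤ y →
      K₃ x y = ∫ z in Set.Ici (0:ℝ), k₁ (lev x z) * k₂ (lev y z) := by
    intro x y hx hy
    rw [f0 x y hx hy]
    apply integral_congr_ae
    filter_upwards [ae_ne y, ae_nonneg'] with z hzy hz
    rw [lev_comm hy hz hzy]
  have f2 : ∀ x y, 0 ≤ x → 0 ≤ y → x ≠ y → K₃ x y = convLev k₁ k₂ (lev x y) :=
    fun x y hx hy hxy => (f1 x y hx hy).trans (conv_formula h2 i1 i2 hx hy hxy)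
  have dz : ∀ x : ℝ, dyadicDist x x = 0 := fun x => by simp [dyadicDist]
  have dpos : ∀ x y, 0 ≤ x → 0 ≤ y → x ≠ y → 0 < dyadicDist x y := fun x y hx hy hxy => by
    rw [dyadicDist_eq hx hy hxy]
    positivity
  refine ⟨?_, ?_, ?_, ?_⟩
  · intro x y hx hy
    rw [f1 x y hx hy]
    exact integral_nonneg fun z => mul_nonneg (h1 _) (h2 _)
  · intro x y x' y' hx hy hx' hy' hd
    by_cases hxy : x = y
    · subst hxy
      by_cases hxy' : x' = y'
      · subst hxy'
        rw [f1 x x hx hx, f1 x' x' hx' hx', integral_lev hx (fun j => k₁ j * k₂ j),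
          integral_lev hx' (fun j => k₁ j * k₂ j)]
      · have := dpos _ _ hx' hy' hxy'
        rw [dz] at hd
        linarith
    · by_cases hxy' : x' = y'
      · subst hxy'
        have := dpos _ _ hx hy hxy
        rw [dz] at hd
        linarith
      · rw [f2 x y hx hy hxy, f2 x' y' hx' hy' hxy']
        rw [dyadicDist_eq hx hy hxy, dyadicDist_eq hx' hy' hxy'] at hd
        rw [zpow_right_injective₀ (by norm_num) (by norm_num) hd]
  · intro x hx
    rw [← integral_conv h2 i1 i2 e1 e2 hx]
    apply integral_congr_ae
    filter_upwards [ae_nonneg'] with y hy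
    exact f0 x y hx hy
  · intro ε hε
    have t := tendsto_conv h1 h2 i1 i2 e1 e2 (kernel_tendsto hstab₁) (kernel_tendsto hstab₂)
    obtain ⟨M, hM⟩ := (Metric.tendsto_atTop.1 t) ε hε
    refine ⟨(2:ℝ)^M, fun x y hx hy hR => ?_⟩
    have hp : (0:ℝ) < (2:ℝ)^M := by positivity
    have hxy : x ≠ y := by
      rintro rfl
      rw [dz] at hR
      linarith
    rw [f2 x y hx hy hxy]
    rw [dyadicDist_eq hx hy hxy] at hR ⊢
    exact hM _ ((zpow_le_zpow_iff_right₀ one_lt_two).1 hR)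
end
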